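/- For every integer n ≥ 1, over PA⁻ + IΣn the statement fairFRT^1_2(Σ_{n+1}) is strictly weaker than each of fairFRT^1(Σ_{n+1}), FRT^1_2(Σ_{n+1}) and GPHP(Σ_{n+1}): each of the latter three implies fairFRT^1_2(Σ_{n+1}) over PA⁻ + IΣn, but PA⁻ + IΣn + fairFRT^1_2(Σ_{n+1}) proves none of the three (indeed PA⁻ + IΣn proves fairFRT^1_2(Σ_{n+1}) while not proving any of the three). -/

import Mathlib

/- Shared development: first-order arithmetic in the language {0,1,+,·,<},
   the arithmetic hierarchy, fragments of arithmetic, and coded finite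
   combinatorics inside models. -/

open FirstOrder Language

namespace ArithFC

/-- Function symbols of the language of arithmetic: 0, 1, +, ·. -/
inductive Func : ℕ → Type
  | zero : Func 0
  | one : Func 0
  | add : Func 2
  | mul : Func 2

/-- Relation symbols of the language of arithmetic: <. -/
inductive Rel : ℕ → Type
  | lt : Rel 2

/-- The first-order language {0, 1, +, ·, <}. -/
def lang : Language :=
  { Functions := Func, Relations := Rel }

section Instances

variable (M : Type) [lang.Structure M]

instance : Zero M := ⟨Structure.funMap (L := lang) Func.zero ![]⟩
instance : One M := ⟨Structure.funMap (L := lang) Func.one ![]⟩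
instance : Add M := ⟨fun x y => Structure.funMap (L := lang) Func.add ![x, y]⟩
instance : Mul M := ⟨fun x y => Structure.funMap (L := lang) Func.mul ![x, y]⟩
instance : LT M := ⟨fun x y => Structure.RelMap (L := lang) Rel.lt ![x, y]⟩
instance : LE M := ⟨fun x y => x < y ∨ x = y⟩

end Instances

/-- The numeral `n` in a model. -/
def numM (M : Type) [lang.Structure M] : ℕ → M
  | 0 => 0
  | n + 1 => numM M n + 1

/-- `b` is nonstandard (greater than every numeral). -/
def Nonstd {M : Type} [lang.Structure M] (b : M) : Prop := ∀ n : ℕ, numM M n < b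

/-- The atomic formula `t < u`. -/
def ltFm {α : Type} {n : ℕ} (t u : lang.Term (α ⊕ Fin n)) : lang.BoundedFormula α n :=
  BoundedFormula.rel (Rel.lt : lang.Relations 2) ![t, u]

/-- Δ₀ formulas: built from atomic formulas by boolean connectives and
bounded universal quantification (this generates, up to logical equivalence,
the usual class of bounded formulas). -/
inductive IsDelta0 {α : Type} : ∀ n : ℕ, lang.BoundedFormula α n → Prop
  | falsum (n : ℕ) : IsDelta0 n BoundedFormula.falsum
  | equal (n : ℕ) (t u : lang.Term (α ⊕ Fin n)) : IsDelta0 n (BoundedFormula.equal t u)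
  | rel (n l : ℕ) (R : lang.Relations l) (ts : Fin l → lang.Term (α ⊕ Fin n)) :
      IsDelta0 n (BoundedFormula.rel R ts)
  | imp (n : ℕ) {φ ψ : lang.BoundedFormula α n} :
      IsDelta0 n φ → IsDelta0 n ψ → IsDelta0 n (φ.imp ψ)
  | bdAll (n : ℕ) (t : lang.Term (α ⊕ Fin n)) {φ : lang.BoundedFormula α (n + 1)} :
      IsDelta0 (n + 1) φ →
      IsDelta0 n
        (BoundedFormula.all ((ltFm (Term.var (Sum.inr (Fin.last n))) (t.liftAt 1 n)).imp φ))

mutual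
  /-- Σ_m formulas. -/
  inductive SigmaFm {α : Type} : ℕ → ∀ n : ℕ, lang.BoundedFormula α n → Prop
    | delta0 (m n : ℕ) {φ : lang.BoundedFormula α n} : IsDelta0 n φ → SigmaFm m n φ
    | ofPi (m n : ℕ) {φ : lang.BoundedFormula α n} : PiFm m n φ → SigmaFm (m + 1) n φ
    | ex (m n : ℕ) {φ : lang.BoundedFormula α (n + 1)} :
        SigmaFm (m + 1) (n + 1) φ → SigmaFm (m + 1) n φ.ex
  /-- Π_m formulas. -/
  inductive PiFm {α : Type} : ℕ → ∀ n : ℕ, lang.BoundedFormula α n → Prop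
    | delta0 (m n : ℕ) {φ : lang.BoundedFormula α n} : IsDelta0 n φ → PiFm m n φ
    | ofSigma (m n : ℕ) {φ : lang.BoundedFormula α n} : SigmaFm m n φ → PiFm (m + 1) n φ
    | all (m n : ℕ) {φ : lang.BoundedFormula α (n + 1)} :
        PiFm (m + 1) (n + 1) φ → PiFm (m + 1) n φ.all
end

/-- A `k`-ary relation on `M` is Σ_m-definable (with parameters from `M`). -/
def IsSigmaDef (m : ℕ) (M : Type) [lang.Structure M] {k : ℕ} (R : (Fin k → M) → Prop) : Prop :=
  ∃ (p : ℕ) (φ : lang.BoundedFormula (Fin k ⊕ Fin p) 0) (w : Fin p → M),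
    SigmaFm m 0 φ ∧ ∀ v : Fin k → M, R v ↔ φ.Realize (Sum.elim v w) finZeroElim

/-- A subset of `M` is Σ_m-definable with parameters. -/
def SigmaDef1 (m : ℕ) (M : Type) [lang.Structure M] (A : Set M) : Prop :=
  IsSigmaDef m M (k := 1) fun v => v 0 ∈ A

/-- A binary relation on `M` is Σ_m-definable with parameters. -/
def SigmaDef2 (m : ℕ) (M : Type) [lang.Structure M] (R : M → M → Prop) : Prop :=
  IsSigmaDef m M (k := 2) fun v => R (v 0) (v 1)

/-- A ternary relation on `M` is Σ_m-definable with parameters. -/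
def SigmaDef3 (m : ℕ) (M : Type) [lang.Structure M] (R : M → M → M → Prop) : Prop :=
  IsSigmaDef m M (k := 3) fun v => R (v 0) (v 1) (v 2)

/-- `M` is a model of PA⁻ (the nonnegative part of a discretely ordered
commutative semiring). -/
structure PAm (M : Type) [lang.Structure M] : Prop where
  add_assoc : ∀ x y z : M, x + y + z = x + (y + z)
  add_comm : ∀ x y : M, x + y = y + x
  mul_assoc : ∀ x y z : M, x * y * z = x * (y * z)
  mul_comm : ∀ x y : M, x * y = y * x
  ldistrib : ∀ x y z : M, x * (y + z) = x * y + x * z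
  add_zero : ∀ x : M, x + 0 = x
  mul_zero : ∀ x : M, x * 0 = 0
  mul_one : ∀ x : M, x * 1 = x
  lt_trans : ∀ x y z : M, x < y → y < z → x < z
  lt_irrefl : ∀ x : M, ¬x < x
  lt_total : ∀ x y : M, x < y ∨ x = y ∨ y < x
  add_lt_add : ∀ x y z : M, x < y → x + z < y + z
  mul_lt_mul : ∀ x y z : M, x < y → 0 < z → x * z < y * z
  sub_exists : ∀ x y : M, x < y → ∃ z, x + z = y
  zero_lt_one : (0 : M) < 1
  discrete : ∀ x : M, 0 < x → (1 : M) ≤ x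
  zero_le : ∀ x : M, (0 : M) ≤ x

/-- `M` satisfies the Σ_m-induction scheme (with parameters). -/
def ISig (m : ℕ) (M : Type) [lang.Structure M] : Prop :=
  ∀ A : Set M, SigmaDef1 m M A → (0 : M) ∈ A → (∀ x, x ∈ A → x + 1 ∈ A) → ∀ x, x ∈ A

/-- `M` satisfies the Σ_m-collection (bounding) scheme (with parameters). -/
def BSig (m : ℕ) (M : Type) [lang.Structure M] : Prop :=
  ∀ R : M → M → Prop, SigmaDef2 m M R → ∀ a : M,
    (∀ x, x < a → ∃ y, R x y) → ∃ b, ∀ x, x < a → ∃ y, y < b ∧ R x y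

section Coding

variable {M : Type} [lang.Structure M]

/-- `z` is the Cantor pair `⟨x, y⟩`: `2z = (x+y)(x+y+1) + 2y`. -/
def IsPairC (z x y : M) : Prop := z + z = (x + y) * (x + y + 1) + (y + y)

/-- Gödel's β-function: `x = a mod ((i+1)·b + 1)`. -/
def BetaC (a b i x : M) : Prop :=
  x < (i + 1) * b + 1 ∧ ∃ q, a = q * ((i + 1) * b + 1) + x

/-- The sequence coded by `s` (via a Cantor pair of β-function data) has value `x`
at place `i`. -/
def SeqAt (s i x : M) : Prop := ∃ a b, IsPairC s a b ∧ BetaC a b i x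

/-- `c` codes the M-finite set `X` of cardinality `card`: `c = ⟨card, s⟩` where `s`
codes the strictly increasing enumeration of `X` of length `card`. -/
def CodesFinset (c : M) (X : Set M) (card : M) : Prop :=
  ∃ s, IsPairC c card s ∧
    (∀ i, i < card → ∃ x, x ∈ X ∧ SeqAt s i x) ∧
    (∀ i j x y, i < j → j < card → SeqAt s i x → SeqAt s j y → x < y) ∧
    (∀ x, x ∈ X ↔ ∃ i, i < card ∧ SeqAt s i x)

/-- `X` is an M-finite (coded) set. -/
def MFinite (X : Set M) : Prop := ∃ c card : M, CodesFinset c X card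

/-- `d` codes an `e`-element subset `D` of `[0, y)`, i.e. an element of `[y]^e`. -/
def CodesTupleIn (d e y : M) (D : Set M) : Prop :=
  CodesFinset d D e ∧ ∀ z ∈ D, z < y

/-- `f` codes a (finite) function defined on all of `[0, a)`. -/
def CodesFunOn (f a : M) : Prop :=
  ∀ x, x < a → (∃ y, SeqAt f x y) ∧ ∀ y y', SeqAt f x y → SeqAt f x y' → y = y'

/-- `X` is an M-coded subset of `[0, a)`. -/
def MCodedSubset (a : M) (X : Set M) : Prop :=
  MFinite X ∧ ∀ x ∈ X, x < a

end Coding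

/-- An `M`-ultrafilter on `a`: an ultrafilter of the Boolean algebra of
M-finite subsets of `[0, a)`. -/
structure MUltra (M : Type) [lang.Structure M] (a : M) where
  sets : Set (Set M)
  mem_coded : ∀ X ∈ sets, MCodedSubset a X
  univ_mem : {x : M | x < a} ∈ sets
  superset_mem : ∀ X Y : Set M, X ∈ sets → MCodedSubset a Y → X ⊆ Y → Y ∈ sets
  inter_mem : ∀ X Y : Set M, X ∈ sets → Y ∈ sets → X ∩ Y ∈ sets
  empty_not_mem : (∅ : Set M) ∉ sets
  ultra : ∀ X : Set M, MCodedSubset a X → X ∈ sets ∨ {x : M | x < a ∧ x ∉ X} ∈ sets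

section Principles

variable (M : Type) [lang.Structure M]

/-- `F` is (the graph of) a Σ_m-definable injection from `[0, y)` into `[0, x)`. -/
def SigmaInjRel (m : ℕ) (F : M → M → Prop) (y x : M) : Prop :=
  SigmaDef2 m M F ∧
    (∀ u, u < y → ∃ v, v < x ∧ F u v) ∧
    (∀ u v v', u < y → F u v → F u v' → v = v') ∧
    (∀ u u' v, u < y → u' < y → F u v → F u' v → u = u')

/-- There exists a Σ_m-definable injection from `[0, y)` into `[0, x)`. -/
def ExSigmaInj (m : ℕ) (y x : M) : Prop := ∃ F : M → M → Prop, SigmaInjRel M m F y x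

/-- There exists a Σ_m-definable injection from all of `M` into `[0, a)`. -/
def SigmaInjWhole (m : ℕ) (a : M) : Prop :=
  ∃ F : M → M → Prop, SigmaDef2 m M F ∧
    (∀ u, ∃ v, v < a ∧ F u v) ∧
    (∀ u v v', F u v → F u v' → v = v') ∧
    (∀ u u' v, F u v → F u' v → u = u')

/-- CARD(Σ_m): no Σ_m-definable multivalued map sends `M` injectively below `a`. -/
def CARD (m : ℕ) : Prop :=
  ∀ F : M → M → Prop, SigmaDef2 m M F → ∀ a : M,
    (∀ x, ∃ y, y < a ∧ F x y) →
      ∃ x0 x1 y, x0 ≠ x1 ∧ y < a ∧ F x0 y ∧ F x1 y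

/-- GPHP(Σ_m): for every `x` there is `y` with no Σ_m-definable injection of
`[0,y)` into `[0,x)`. -/
def GPHP (m : ℕ) : Prop := ∀ x : M, ∃ y : M, ¬ExSigmaInj M m y x

/-- WPHP(Σ_m): for `x > 0` there is no Σ_m-definable injection of `[0,2x)` into `[0,x)`. -/
def WPHP (m : ℕ) : Prop := ∀ x : M, 0 < x → ¬ExSigmaInj M m (x + x) x

/-- `C` is a Σ_m-definable `k`-coloring of `[y]^e` (acting on codes of
`e`-element subsets of `[0,y)`, independently of the chosen code). -/
def IsColoring (m : ℕ) (e y k : M) (C : M → M → Prop) : Prop :=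
  SigmaDef2 m M C ∧
    (∀ d D, CodesTupleIn d e y D → ∃ i, i < k ∧ C d i) ∧
    (∀ d d' D i i', CodesTupleIn d e y D → CodesTupleIn d' e y D → C d i → C d' i' → i = i')

/-- FRT^e_k(Σ_m): every Σ_m-definable `k`-coloring of some `[y]^e` has an
M-finite homogeneous set of cardinality `x`, for every `x`. -/
def FRT (m : ℕ) (e k : M) : Prop :=
  ∀ x : M, ∃ y : M, ∀ C : M → M → Prop, IsColoring M m e y k C →
    ∃ (c : M) (H : Set M), CodesFinset c H x ∧ (∀ z ∈ H, z < y) ∧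
      ∃ i, ∀ d D, CodesFinset d D e → D ⊆ H → C d i

/-- fairFRT^e_k(Σ_m): the homogeneous set is required to be given as the range of a
Σ_m-definable injection from `[0,x)` into `[0,y)`. -/
def FairFRT (m : ℕ) (e k : M) : Prop :=
  ∀ x : M, ∃ y : M, ∀ C : M → M → Prop, IsColoring M m e y k C →
    ∃ H : M → M → Prop, SigmaInjRel M m H x y ∧
      ∃ i, ∀ d D, CodesFinset d D e → (∀ z ∈ D, ∃ u, u < x ∧ H u z) → C d i

/-- `C` is a Σ_m-definable `k`-coloring of `[0, y)`. -/
def IsColoring1 (m : ℕ) (y k : M) (C : M → M → Prop) : Prop :=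
  SigmaDef2 m M C ∧
    (∀ z, z < y → ∃ i, i < k ∧ C z i) ∧
    (∀ z i i', z < y → C z i → C z i' → i = i')

/-- FRT¹_k(Σ_m): every Σ_m-definable `k`-coloring of some `[0,y)` has an M-finite
homogeneous set of cardinality `x`, for every `x`. -/
def FRT1 (m : ℕ) (k : M) : Prop :=
  ∀ x : M, ∃ y : M, ∀ C : M → M → Prop, IsColoring1 M m y k C →
    ∃ (c : M) (H : Set M), CodesFinset c H x ∧ (∀ z ∈ H, z < y) ∧
      ∃ i, ∀ z ∈ H, C z i

/-- fairFRT¹_k(Σ_m). -/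
def FairFRT1 (m : ℕ) (k : M) : Prop :=
  ∀ x : M, ∃ y : M, ∀ C : M → M → Prop, IsColoring1 M m y k C →
    ∃ H : M → M → Prop, SigmaInjRel M m H x y ∧
      ∃ i, ∀ u v, u < x → H u v → C v i

end Principles

section Approx

variable {M : Type} [lang.Structure M]

/-- `f` is (the graph of) a partial function. -/
def IsPartialFun (f : M → M → Prop) : Prop := ∀ x y y', f x y → f x y' → y = y'

/-- `s` codes an approximation to the partial function `f` of length `b`. -/
def IsApprox (f : M → M → Prop) (s b : M) : Prop :=
  (∀ i, i < b → ∃ v, SeqAt s i v) ∧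
    (∀ i u v x y, i + 1 < b → SeqAt s i u → SeqAt s (i + 1) v → x ≤ u → f x y → y ≤ v)

/-- `s` codes a `g`-stretched approximation to the partial function `f` of length `b`. -/
def IsStretchedApprox (f g : M → M → Prop) (s b : M) : Prop :=
  (∀ i, i < b → ∃ v, SeqAt s i v) ∧
    (∀ i u w v x y, i + 1 < b → SeqAt s i u → g u w → SeqAt s (i + 1) v →
      x ≤ w → f x y → y ≤ v)

/-- The eventual (limit) value of `fun s => h s ·` is `x`. -/
def EvLim (h : M → M → Prop) (x : M) : Prop := ∃ s : M, ∀ t, s < t → h t x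

end Approx

/-- PΣ_m: every partial Σ_m-definable function admits approximations of every length. -/
def PSig (m : ℕ) (M : Type) [lang.Structure M] : Prop :=
  ∀ f : M → M → Prop, SigmaDef2 m M f → IsPartialFun f → ∀ b : M, ∃ s, IsApprox f s b

section Extensions

variable (M N : Type) [lang.Structure M] [lang.Structure N]

/-- `g : M → N` is Σ_m-elementary: Σ_m formulas with parameters from `M` transfer. -/
def SigmaElem (m : ℕ) (g : M → N) : Prop :=
  ∀ (p : ℕ) (φ : lang.BoundedFormula (Fin p) 0), SigmaFm m 0 φ →
    ∀ v : Fin p → M, (φ.Realize v finZeroElim ↔ φ.Realize (g ∘ v) finZeroElim)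

/-- The extension `g : M → N` is cofinal. -/
def Cofinal (g : M → N) : Prop := ∀ z : N, ∃ x : M, z ≤ g x

/-- `[0,a]^M = [0,a]^N`: every element of `N` below `g a` comes from `M`. -/
def SameBelow (g : M → N) (a : M) : Prop := ∀ z : N, z ≤ g a → ∃ x : M, g x = z

end Extensions

section Ramsey

variable {M : Type} [lang.Structure M]

/-- `f` is an M-coded `k`-coloring of `[y]^e` (assigning colors to codes of
`e`-subsets of `[0,y)`, independently of the code). -/
def CodedColoring (f e y k : M) : Prop :=
  (∀ d D, CodesTupleIn d e y D → ∃ i, i < k ∧ SeqAt f d i) ∧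
    (∀ d d' D i i', CodesTupleIn d e y D → CodesTupleIn d' e y D →
      SeqAt f d i → SeqAt f d' i' → i = i')

/-- The coded coloring `f` of `[y]^e` has an M-coded homogeneous set of cardinality `x`. -/
def CodedHomog (f e y x : M) : Prop :=
  ∃ (c : M) (H : Set M), CodesFinset c H x ∧ (∀ z ∈ H, z < y) ∧
    ∃ i, ∀ d D, CodesFinset d D e → D ⊆ H → SeqAt f d i

/-- `y = r(x, e, k)`: `y` is the least size guaranteeing coded homogeneous sets of
cardinality `x` for all coded `k`-colorings of `e`-subsets. -/
def IsRamsey (x e k y : M) : Prop :=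
  (∀ f, CodedColoring f e y k → CodedHomog f e y x) ∧
    (∀ y', y' < y → ∃ f, CodedColoring f e y' k ∧ ¬CodedHomog f e y' x)

/-- `y = r^(b)(x, e, k)`: the `b`-th iterate of the Ramsey function inside `M`. -/
def IterRamsey (x e k b y : M) : Prop :=
  ∃ s : M, SeqAt s 0 x ∧ SeqAt s b y ∧ (∀ i, i ≤ b → ∃ u, SeqAt s i u) ∧
    (∀ i u v, i < b → SeqAt s i u → SeqAt s (i + 1) v → IsRamsey u e k v)

end Ramsey

end ArithFC

/-
Positive part: cut `[0, x * x)` into `x` blocks of size `x`. Either some block has colour `1`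
throughout, and is a homogeneous set of size `x`, or every block has a point of colour `0`, and
`Σ_{n+1}` uniformization picks one point of colour `0` from each block.

Negative part: all three principles fail in the `Σ_{n+1}` hull `K` of the nonstandard element `[id]`
in an ultrapower of `ℕ`, which satisfies Łoś's theorem for `Σ_{n+1}` formulas and hence `PA⁻ + IΣn`.
At index `i`, only `i` of the `Σ_{n+1}` descriptions are available, so that running through them by
stages lists at most `3 * i` elements, three for each description: the named element `t` and two
new values of the sequence coded by `t`, one at an even and one at an odd position. Hence the
position in the listing is a `Σ_{n+1}` injection of all of `K` into a proper initial segment, which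
refutes GPHP and fairFRT¹, and the parity of the position is a `Σ_{n+1}` `2`-colouring which takes
both values on every coded injective sequence of length `3 * [id] + 2`, which refutes FRT¹₂.
-/

namespace ArithFC

section Context

variable {M : Type} {Γ Δ Θ : Type}

/-- A context over `M`: a type `Γ` of assignments, each giving values in `M` to a family of
variables. Using arbitrary products as contexts instead of tuples `Fin k → M` keeps the
variables of a definable relation named. -/
class Context (M : Type) (Γ : Type) where
  vars : Set (Γ → M)

instance : Context M M := ⟨{id}⟩

instance [Context M Γ] [Context M Δ] : Context M (Γ × Δ) :=
  ⟨{x | (∃ y ∈ Context.vars, x = y ∘ Prod.fst) ∨ ∃ y ∈ Context.vars, x = y ∘ Prod.snd}⟩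

instance {ι : Type} {X : ι → Type} [∀ i, Context M (X i)] : Context M (∀ i, X i) :=
  ⟨{x | ∃ i, ∃ y ∈ Context.vars, x = y ∘ Function.eval i}⟩

variable [Add M] [Mul M] [Context M Γ] [Context M Δ] [Context M Θ]

/-- The polynomial functions on a context, with parameters from `M`: the values of terms. -/
inductive IsPoly [Context M Γ] : (Γ → M) → Prop
  | var {x : Γ → M} : x ∈ Context.vars → IsPoly x
  | const (c : M) : IsPoly fun _ => c
  | add {s t : Γ → M} : IsPoly s → IsPoly t → IsPoly fun γ => s γ + t γ
  | mul {s t : Γ → M} : IsPoly s → IsPoly t → IsPoly fun γ => s γ * t γ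

variable (M) in
/-- Maps between contexts all of whose components are polynomial; these are the substitutions
under which the classes of definable relations below are closed. -/
@[fun_prop]
def IsPolyMap (G : Γ → Δ) : Prop := ∀ x ∈ Context.vars (M := M), IsPoly (x ∘ G)

theorem IsPoly.comp {t : Δ → M} {G : Γ → Δ} (ht : IsPoly t) (hG : IsPolyMap M G) :
    IsPoly (t ∘ G) := by
  induction ht with
  | var hx => exact hG _ hx
  | const c => exact .const c
  | add _ _ hs ht => exact hs.add ht
  | mul _ _ hs ht => exact hs.mul ht

theorem isPolyMap_iff {t : Γ → M} : IsPolyMap M t ↔ IsPoly t :=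
  ⟨fun h => h id rfl, fun h x hx => by rwa [show x = id from hx]⟩

namespace IsPolyMap

@[fun_prop]
theorem id : IsPolyMap M (fun γ : Γ => γ) := fun _ => .var

@[fun_prop]
theorem const (d : Δ) : IsPolyMap M (fun _ : Γ => d) := fun x _ => .const (x d)

@[fun_prop]
theorem comp {G : Δ → Θ} {H : Γ → Δ} (hG : IsPolyMap M G) (hH : IsPolyMap M H) :
    IsPolyMap M (fun γ => G (H γ)) := fun x hx => (hG x hx).comp hH

@[fun_prop]
theorem fst : IsPolyMap M (Prod.fst : Γ × Δ → Γ) := fun x hx => .var (.inl ⟨x, hx, rfl⟩)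

@[fun_prop]
theorem snd : IsPolyMap M (Prod.snd : Γ × Δ → Δ) := fun x hx => .var (.inr ⟨x, hx, rfl⟩)

@[fun_prop]
theorem prodMk {G : Γ → Δ} {H : Γ → Θ} (hG : IsPolyMap M G) (hH : IsPolyMap M H) :
    IsPolyMap M (fun γ => (G γ, H γ)) := by
  rintro _ (⟨x, hx, rfl⟩ | ⟨x, hx, rfl⟩)
  · exact hG x hx
  · exact hH x hx

@[fun_prop]
theorem apply {ι : Type} {X : ι → Type} [∀ i, Context M (X i)] (i : ι) :
    IsPolyMap M (fun f : ∀ i, X i => f i) := fun x hx => .var ⟨i, x, hx, rfl⟩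

@[fun_prop]
theorem pi {ι : Type} {X : ι → Type} [∀ i, Context M (X i)] {G : Γ → ∀ i, X i}
    (hG : ∀ i, IsPolyMap M (fun γ => G γ i)) : IsPolyMap M G := by
  rintro _ ⟨i, x, hx, rfl⟩
  exact hG i x hx

@[fun_prop]
theorem sumElim {ι κ : Type} {f : Γ → ι → M} {g : Γ → κ → M} (hf : IsPolyMap M f)
    (hg : IsPolyMap M g) : IsPolyMap M fun γ => Sum.elim (f γ) (g γ) :=
  .pi (Sum.rec (fun i => (IsPolyMap.apply i).comp hf) fun i => (IsPolyMap.apply i).comp hg)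

@[fun_prop]
theorem snoc {k : ℕ} {w : Γ → Fin k → M} {y : Γ → M} (hw : IsPolyMap M w)
    (hy : IsPolyMap M y) : IsPolyMap M fun γ => (Fin.snoc (w γ) (y γ) : Fin (k + 1) → M) :=
  .pi (Fin.lastCases (by simpa only [Fin.snoc_last])
    fun i => by simpa only [Fin.snoc_castSucc] using (IsPolyMap.apply i).comp hw)

@[fun_prop]
theorem add {s t : Γ → M} (hs : IsPolyMap M s) (ht : IsPolyMap M t) :
    IsPolyMap M (fun γ => s γ + t γ) :=
  isPolyMap_iff.2 ((isPolyMap_iff.1 hs).add (isPolyMap_iff.1 ht))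

@[fun_prop]
theorem mul {s t : Γ → M} (hs : IsPolyMap M s) (ht : IsPolyMap M t) :
    IsPolyMap M (fun γ => s γ * t γ) :=
  isPolyMap_iff.2 ((isPolyMap_iff.1 hs).mul (isPolyMap_iff.1 ht))

end IsPolyMap

end Context

section Definability

variable {M : Type} {Γ Δ : Type} {m n : ℕ}

section Hierarchy

variable [Add M] [Mul M] [LT M]

variable (M) in
/-- The relations defined by bounded formulas with parameters. -/
inductive IsBounded : ∀ {Γ : Type} [Context M Γ], (Γ → Prop) → Prop
  | falsum {Γ : Type} [Context M Γ] : IsBounded fun _ : Γ => False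
  | eq {Γ : Type} [Context M Γ] {s t : Γ → M} :
      IsPolyMap M s → IsPolyMap M t → IsBounded fun γ => s γ = t γ
  | lt {Γ : Type} [Context M Γ] {s t : Γ → M} :
      IsPolyMap M s → IsPolyMap M t → IsBounded fun γ => s γ < t γ
  | imp {Γ : Type} [Context M Γ] {R Q : Γ → Prop} :
      IsBounded R → IsBounded Q → IsBounded fun γ => R γ → Q γ
  | ball {Γ : Type} [Context M Γ] {t : Γ → M} {R : Γ × M → Prop} :
      IsPolyMap M t → IsBounded R → IsBounded fun γ => ∀ y < t γ, R (γ, y)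

variable (M) in
/-- The Σ_m relations, presented semantically: each level adds one unbounded existential
quantifier in front of the negation of a relation of the previous level. -/
def IsSigma : ℕ → ∀ {Γ : Type} [Context M Γ], (Γ → Prop) → Prop
  | 0, _, _, R => IsBounded M R
  | m + 1, Γ, _, R => ∃ P : Γ × M → Prop, IsSigma m P ∧ ∀ γ, R γ ↔ ∃ y, ¬P (γ, y)

variable [Context M Γ] [Context M Δ] {R Q : Γ → Prop}

namespace IsBounded

theorem comp {R : Δ → Prop} (hR : IsBounded M R) {G : Γ → Δ} (hG : IsPolyMap M G) :
    IsBounded M fun γ => R (G γ) := by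
  induction hR generalizing Γ with
  | falsum => exact .falsum
  | eq hs ht => exact .eq (hs.comp hG) (ht.comp hG)
  | lt hs ht => exact .lt (hs.comp hG) (ht.comp hG)
  | imp _ _ ihR ihQ => exact .imp (ihR hG) (ihQ hG)
  | ball ht _ ih => exact .ball (ht.comp hG) (ih (G := fun p => (G p.1, p.2)) (by fun_prop))

theorem not (hR : IsBounded M R) : IsBounded M fun γ => ¬R γ := hR.imp .falsum

theorem and (hR : IsBounded M R) (hQ : IsBounded M Q) : IsBounded M fun γ => R γ ∧ Q γ := by
  simpa only [Classical.not_imp, not_not] using (hR.imp hQ.not).not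

theorem or (hR : IsBounded M R) (hQ : IsBounded M Q) : IsBounded M fun γ => R γ ∨ Q γ := by
  simpa only [or_iff_not_imp_left] using hR.not.imp hQ

theorem bex {t : Γ → M} {R : Γ → M → Prop} (ht : IsPolyMap M t)
    (hR : IsBounded M fun p : Γ × M => R p.1 p.2) : IsBounded M fun γ => ∃ y < t γ, R γ y := by
  simpa only [not_forall, not_not, exists_prop] using (IsBounded.ball ht hR.not).not

end IsBounded

namespace IsSigma

theorem congr (hR : IsSigma M m R) (h : ∀ γ, R γ ↔ Q γ) : IsSigma M m Q := by
  rwa [← show R = Q from funext fun γ => propext (h γ)]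

theorem comp {R : Δ → Prop} (hR : IsSigma M m R) {G : Γ → Δ} (hG : IsPolyMap M G) :
    IsSigma M m fun γ => R (G γ) := by
  induction m generalizing Γ Δ with
  | zero => exact IsBounded.comp hR hG
  | succ m ih =>
    obtain ⟨P, hP, h⟩ := hR
    exact ⟨_, ih hP (G := fun p => (G p.1, p.2)) (by fun_prop), fun γ => h (G γ)⟩

theorem not [Nonempty M] (hR : IsSigma M m R) : IsSigma M (m + 1) fun γ => ¬R γ :=
  ⟨fun p => R p.1, hR.comp .fst, fun _ => (exists_const M).symm⟩

theorem succ [Nonempty M] (hR : IsSigma M m R) : IsSigma M (m + 1) R := by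
  induction m generalizing Γ with
  | zero => simpa only [not_not] using IsSigma.not (m := 0) (IsBounded.not hR)
  | succ m ih =>
    obtain ⟨P, hP, h⟩ := hR
    exact ⟨P, ih hP, h⟩

theorem mono [Nonempty M] {l : ℕ} (hlm : l ≤ m) (hR : IsSigma M l R) : IsSigma M m R :=
  Nat.le_induction hR (fun _ _ ih => ih.succ) m hlm

theorem of_isBounded [Nonempty M] (hR : IsBounded M R) : IsSigma M m R :=
  mono (l := 0) m.zero_le hR

theorem exists_matrix {R : Γ → M → Prop} (hR : IsSigma M (m + 1) fun p : Γ × M => R p.1 p.2) :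
    ∃ P : Γ → M → M → Prop, IsSigma M m (fun p : (Γ × M) × M => P p.1.1 p.1.2 p.2) ∧
      ∀ γ y, R γ y ↔ ∃ z, ¬P γ y z := by
  obtain ⟨P, hP, h⟩ := hR
  exact ⟨fun γ y z => P ((γ, y), z), hP, fun γ y => h (γ, y)⟩

end IsSigma

end Hierarchy

/-- The discretely ordered semirings with least element `0` satisfying PA⁻, as a mixin. -/
class PAMinus (M : Type) [CommSemiring M] [LinearOrder M] : Prop
    extends IsStrictOrderedRing M, CanonicallyOrderedAdd M where
  lt_add_one_iff {x y : M} : x < y + 1 ↔ x ≤ y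

instance : PAMinus ℕ where
  lt_add_one_iff := Nat.lt_succ_iff

/-- Induction for Σ_n relations with parameters. -/
class SigmaInduction (M : Type) [CommSemiring M] [LinearOrder M] (n : ℕ) : Prop where
  induction {A : M → Prop} : IsSigma M n A → A 0 → (∀ x, A x → A (x + 1)) → ∀ x, A x

instance : SigmaInduction ℕ n := ⟨fun _ h0 hs x => Nat.rec h0 hs x⟩

section Closure

variable [CommSemiring M] [LinearOrder M] [PAMinus M]

theorem PAMinus.lt_add_one (x : M) : x < x + 1 := lt_add_one_iff.2 le_rfl

theorem PAMinus.exists_gt_gt (x y : M) : ∃ b, x < b ∧ y < b :=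
  ⟨max x y + 1, lt_add_one_iff.2 (le_max_left x y), lt_add_one_iff.2 (le_max_right x y)⟩

variable (M) in
/-- Closure of the Σ_m relations under the positive operations that do not require collection. -/
structure SigmaClosed (m : ℕ) : Prop where
  and {Γ : Type} [Context M Γ] {R Q : Γ → Prop} :
    IsSigma M m R → IsSigma M m Q → IsSigma M m fun γ => R γ ∧ Q γ
  or {Γ : Type} [Context M Γ] {R Q : Γ → Prop} :
    IsSigma M m R → IsSigma M m Q → IsSigma M m fun γ => R γ ∨ Q γ
  bex {Γ : Type} [Context M Γ] {t : Γ → M} {R : Γ → M → Prop} :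
    IsPolyMap M t → IsSigma M m (fun p : Γ × M => R p.1 p.2) →
      IsSigma M m fun γ => ∃ y < t γ, R γ y

variable (M) in
/-- Closure of the Σ_m relations under all positive bounded operations. -/
structure SigmaBallClosed (m : ℕ) : Prop extends SigmaClosed M m where
  ball {Γ : Type} [Context M Γ] {t : Γ → M} {R : Γ → M → Prop} :
    IsPolyMap M t → IsSigma M m (fun p : Γ × M => R p.1 p.2) →
      IsSigma M m fun γ => ∀ y < t γ, R γ y

namespace SigmaBallClosed

variable [Context M Γ]

omit [PAMinus M] in
theorem zero : SigmaBallClosed M 0 where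
  and := IsBounded.and
  or := IsBounded.or
  bex := IsBounded.bex
  ball := IsBounded.ball

theorem ex (hm : SigmaBallClosed M m) {R : Γ → M → Prop}
    (hR : IsSigma M (m + 1) fun p : Γ × M => R p.1 p.2) :
    IsSigma M (m + 1) fun γ => ∃ y, R γ y := by
  obtain ⟨P, hP, hRP⟩ := hR.exists_matrix
  refine ⟨fun p => ∀ x < p.2, ∀ y < p.2, P p.1 x y,
    hm.ball .snd (hm.ball (by fun_prop) (hP.comp
      (G := fun p : ((Γ × M) × M) × M => ((p.1.1.1, p.1.2), p.2)) (by fun_prop))), fun γ => ?_⟩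
  simp only [hRP]
  push Not
  constructor
  · rintro ⟨x, y, hxy⟩
    obtain ⟨b, hx, hy⟩ := PAMinus.exists_gt_gt x y
    exact ⟨b, x, hx, y, hy, hxy⟩
  · rintro ⟨-, x, -, y, -, hxy⟩
    exact ⟨x, y, hxy⟩

theorem and_succ (hm : SigmaBallClosed M m) {R Q : Γ → Prop} (hR : IsSigma M (m + 1) R)
    (hQ : IsSigma M (m + 1) Q) : IsSigma M (m + 1) fun γ => R γ ∧ Q γ := by
  obtain ⟨P, hP, hRP⟩ := hR
  obtain ⟨P', hP', hQP'⟩ := hQ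
  have hG : IsPolyMap M fun p : (Γ × M) × M => (p.1.1, p.2) := by fun_prop
  refine ⟨fun p => (∀ y < p.2, P (p.1, y)) ∨ ∀ y < p.2, P' (p.1, y),
    hm.or (hm.ball .snd (hP.comp hG)) (hm.ball .snd (hP'.comp hG)), fun γ => ?_⟩
  simp only [hRP, hQP']
  push Not
  constructor
  · rintro ⟨⟨x, hx⟩, y, hy⟩
    obtain ⟨b, hxb, hyb⟩ := PAMinus.exists_gt_gt x y
    exact ⟨b, ⟨x, hxb, hx⟩, y, hyb, hy⟩
  · rintro ⟨-, ⟨x, -, hx⟩, y, -, hy⟩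
    exact ⟨⟨x, hx⟩, y, hy⟩

theorem sigmaClosed_succ (hm : SigmaBallClosed M m) : SigmaClosed M (m + 1) where
  and := hm.and_succ
  or := by
    rintro Γ _ R Q ⟨P, hP, hRP⟩ ⟨P', hP', hQP'⟩
    exact ⟨_, hm.and hP hP', fun γ => by simp only [hRP, hQP', not_and_or, exists_or]⟩
  bex ht hR := hm.ex (hm.and_succ (.of_isBounded (.lt .snd (ht.comp .fst))) hR)

theorem collection (hm : SigmaBallClosed M m) [SigmaInduction M (m + 1)] {P : M → M → Prop}
    (hP : IsSigma M m fun p : M × M => P p.1 p.2) (c : M) (h : ∀ x < c, ∃ z, ¬P x z) :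
    ∃ b, ∀ x < c, ∃ z < b, ¬P x z := by
  suffices H : ∀ d, ∃ b, ¬∃ x < d, x < c ∧ ∀ z < b, P x z by
    obtain ⟨b, hb⟩ := H c
    exact ⟨b, by simpa +contextual using hb⟩
  refine SigmaInduction.induction (n := m + 1) ⟨fun p => ∃ x < p.1, x < c ∧ ∀ z < p.2, P x z,
    hm.bex .fst (hm.and (.of_isBounded (.lt .snd (.const c))) (hm.ball (by fun_prop) (hP.comp
      (G := fun p : ((M × M) × M) × M => (p.1.2, p.2)) (by fun_prop)))), fun _ => Iff.rfl⟩ ?_ ?_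
  · exact ⟨0, fun ⟨x, hx, _⟩ => not_lt_zero hx⟩
  · rintro d ⟨b, hb⟩
    by_cases hd : d < c
    · obtain ⟨z, hz⟩ := h d hd
      obtain ⟨b', hbb', hzb'⟩ := PAMinus.exists_gt_gt b z
      refine ⟨b', fun ⟨x, hxd, hxc, hx⟩ => ?_⟩
      rcases (PAMinus.lt_add_one_iff.1 hxd).lt_or_eq with hxd | rfl
      · exact hb ⟨x, hxd, hxc, fun z hz => hx z (hz.trans hbb')⟩
      · exact hz (hx z hzb')
    · refine ⟨b, fun ⟨x, hxd, hxc, hx⟩ => hb ⟨x, ?_, hxc, hx⟩⟩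
      exact (PAMinus.lt_add_one_iff.1 hxd).lt_of_ne fun hxd => hd (hxd ▸ hxc)

theorem succ (hm : SigmaBallClosed M m) [SigmaInduction M (m + 1)] :
    SigmaBallClosed M (m + 1) where
  toSigmaClosed := hm.sigmaClosed_succ
  ball {Γ _ t R} ht hR := by
    obtain ⟨P, hP, hRP⟩ := hR.exists_matrix
    refine ⟨fun p => ∃ y < t p.1, ∀ z < p.2, P p.1 y z, hm.bex (ht.comp .fst)
      (hm.ball (by fun_prop) (hP.comp (G := fun p : ((Γ × M) × M) × M => ((p.1.1.1, p.1.2), p.2))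
        (by fun_prop))), fun γ => ?_⟩
    simp only [hRP]
    push Not
    constructor
    · exact hm.collection (hP.comp (G := fun p : M × M => ((γ, p.1), p.2)) (by fun_prop)) (t γ)
    · rintro ⟨b, hb⟩ y hy
      obtain ⟨z, -, hz⟩ := hb y hy
      exact ⟨z, hz⟩

end SigmaBallClosed

theorem SigmaInduction.mono [SigmaInduction M n] (hmn : m ≤ n) : SigmaInduction M m :=
  ⟨fun hA => SigmaInduction.induction (hA.mono hmn)⟩

variable (M) in
theorem sigmaBallClosed : ∀ (n : ℕ) [SigmaInduction M n], SigmaBallClosed M n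
  | 0, _ => .zero
  | n + 1, _ =>
    have := SigmaInduction.mono (M := M) n.le_succ
    (sigmaBallClosed n).succ

variable [Context M Γ] [SigmaInduction M n]

namespace IsSigma

theorem eq {s t : Γ → M} (hs : IsPolyMap M s) (ht : IsPolyMap M t) :
    IsSigma M m fun γ => s γ = t γ := of_isBounded (.eq hs ht)

theorem lt {s t : Γ → M} (hs : IsPolyMap M s) (ht : IsPolyMap M t) :
    IsSigma M m fun γ => s γ < t γ := of_isBounded (.lt hs ht)

theorem and {R Q : Γ → Prop} (hR : IsSigma M (n + 1) R) (hQ : IsSigma M (n + 1) Q) :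
    IsSigma M (n + 1) fun γ => R γ ∧ Q γ := (sigmaBallClosed M n).and_succ hR hQ

theorem or {R Q : Γ → Prop} (hR : IsSigma M (n + 1) R) (hQ : IsSigma M (n + 1) Q) :
    IsSigma M (n + 1) fun γ => R γ ∨ Q γ := (sigmaBallClosed M n).sigmaClosed_succ.or hR hQ

theorem ex {R : Γ → M → Prop} (hR : IsSigma M (n + 1) fun p : Γ × M => R p.1 p.2) :
    IsSigma M (n + 1) fun γ => ∃ y, R γ y := (sigmaBallClosed M n).ex hR

theorem bex {t : Γ → M} {R : Γ → M → Prop} (ht : IsPolyMap M t)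
    (hR : IsSigma M (n + 1) fun p : Γ × M => R p.1 p.2) :
    IsSigma M (n + 1) fun γ => ∃ y < t γ, R γ y :=
  (sigmaBallClosed M n).sigmaClosed_succ.bex ht hR

theorem ball {t : Γ → M} {R : Γ → M → Prop} (ht : IsPolyMap M t)
    (hR : IsSigma M n fun p : Γ × M => R p.1 p.2) :
    IsSigma M n fun γ => ∀ y < t γ, R γ y := (sigmaBallClosed M n).ball ht hR

end IsSigma

theorem exists_minimal_of_isSigma_not {A : M → Prop} (hA : IsSigma M n fun x => ¬A x)
    (hne : ∃ x, A x) : ∃ x, A x ∧ ∀ z < x, ¬A z := by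
  by_contra! hmin
  obtain ⟨x, hx⟩ := hne
  refine SigmaInduction.induction (n := n) (A := fun x => ∀ z < x, ¬A z)
    (.ball .id (hA.comp .snd)) (fun z hz => absurd hz not_lt_zero) (fun x ih z hz hAz => ?_)
    (x + 1) x (PAMinus.lt_add_one x) hx
  obtain ⟨w, hwz, hw⟩ := hmin z hAz
  exact ih w (hwz.trans_le (PAMinus.lt_add_one_iff.1 hz)) hw

end Closure

end Definability

section Uniformization

variable {M Γ : Type} [LinearOrder M]

/-- For `L b y` meaning that no witness below the bound `b` puts `y` into a relation: `b` is the
least bound admitting a witnessed `y < b`, and `y` is the least point witnessed below `b`. -/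
structure IsFirstWitnessed (L : M → M → Prop) (b y : M) : Prop where
  lt : y < b
  not_avoided : ¬L b y
  bound_minimal : ∀ b' < b, ∀ y' < b', L b' y'
  minimal : ∀ y' < y, L b y'

theorem IsFirstWitnessed.unique {L : M → M → Prop} {b b' y y' : M} (h : IsFirstWitnessed L b y)
    (h' : IsFirstWitnessed L b' y') : y = y' := by
  obtain rfl : b = b' := le_antisymm
    (le_of_not_gt fun hb => h'.not_avoided (h.bound_minimal b' hb y' h'.lt))
    (le_of_not_gt fun hb => h.not_avoided (h'.bound_minimal b hb y h.lt))
  exact le_antisymm (le_of_not_gt fun hy => h'.not_avoided (h.minimal y' hy))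
    (le_of_not_gt fun hy => h.not_avoided (h'.minimal y hy))

variable [CommSemiring M] [PAMinus M] [Context M Γ] {n : ℕ} [SigmaInduction M n]

theorem exists_isFirstWitnessed {L : M → M → Prop} (hL : IsSigma M n fun p : M × M => L p.1 p.2)
    {b y : M} (hyb : y < b) (hy : ¬L b y) : ∃ y b, IsFirstWitnessed L b y := by
  obtain ⟨c, ⟨x, hxc, hx⟩, hc⟩ := exists_minimal_of_isSigma_not (n := n)
    (A := fun b => ∃ y < b, ¬L b y) (by
      push Not
      exact .ball .id hL) ⟨b, y, hyb, hy⟩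
  obtain ⟨y, hy, hymin⟩ := exists_minimal_of_isSigma_not (n := n) (A := fun y => ¬L c y)
    (by simpa only [not_not] using hL.comp (G := fun y => (c, y)) (by fun_prop)) ⟨x, hx⟩
  push Not at hc hymin
  exact ⟨y, c, (le_of_not_gt fun hxy => hx (hymin x hxy)).trans_lt hxc, hy, hc, hymin⟩

theorem IsSigma.isFirstWitnessed {L : Γ → M → M → Prop}
    (hL : IsSigma M n fun p : (Γ × M) × M => L p.1.1 p.1.2 p.2) :
    IsSigma M (n + 1) fun p : (Γ × M) × M => IsFirstWitnessed (L p.1.1) p.1.2 p.2 := by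
  have hbound : IsSigma M n fun p : (Γ × M) × M => ∀ b' < p.1.2, ∀ y' < b', L p.1.1 b' y' :=
    .ball (by fun_prop) (.ball .snd (hL.comp
      (G := fun p : (((Γ × M) × M) × M) × M => ((p.1.1.1.1, p.1.2), p.2)) (by fun_prop)))
  have hmin : IsSigma M n fun p : (Γ × M) × M => ∀ y' < p.2, L p.1.1 p.1.2 y' :=
    .ball .snd (hL.comp (G := fun p : ((Γ × M) × M) × M => (p.1.1, p.2)) (by fun_prop))
  exact (IsSigma.and (.lt .snd (by fun_prop)) (.and hL.not (.and hbound.succ hmin.succ))).congr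
    fun p => ⟨fun ⟨h₁, h₂, h₃, h₄⟩ => ⟨h₁, h₂, h₃, h₄⟩, fun ⟨h₁, h₂, h₃, h₄⟩ => ⟨h₁, h₂, h₃, h₄⟩⟩

theorem IsSigma.exists_uniformization {R : Γ → M → Prop}
    (hR : IsSigma M (n + 1) fun p : Γ × M => R p.1 p.2) :
    ∃ Q : Γ → M → Prop, IsSigma M (n + 1) (fun p : Γ × M => Q p.1 p.2) ∧
      (∀ γ y, Q γ y → R γ y) ∧ (∀ γ y y', Q γ y → Q γ y' → y = y') ∧
      ∀ γ, (∃ y, R γ y) → ∃ y, Q γ y := by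
  obtain ⟨P, hP, hRP⟩ := hR.exists_matrix
  let L (γ : Γ) (b y : M) : Prop := ∀ z < b, P γ y z
  have hL : IsSigma M n fun p : (Γ × M) × M => L p.1.1 p.1.2 p.2 := .ball (by fun_prop)
    (hP.comp (G := fun p : ((Γ × M) × M) × M => ((p.1.1.1, p.1.2), p.2)) (by fun_prop))
  refine ⟨fun γ y => ∃ b, IsFirstWitnessed (L γ) b y,
    .ex (hL.isFirstWitnessed.comp (G := fun p : (Γ × M) × M => ((p.1.1, p.2), p.1.2))
      (by fun_prop)), ?_, fun γ y y' ⟨_, h⟩ ⟨_, h'⟩ => h.unique h', ?_⟩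
  · rintro γ y ⟨b, hb⟩
    obtain ⟨z, -, hz⟩ : ∃ z < b, ¬P γ y z := by simpa [L] using hb.not_avoided
    exact (hRP γ y).2 ⟨z, hz⟩
  · rintro γ ⟨y, hy⟩
    obtain ⟨z, hz⟩ := (hRP γ y).1 hy
    obtain ⟨b, hyb, hzb⟩ := PAMinus.exists_gt_gt y z
    exact exists_isFirstWitnessed (hL.comp (G := fun p : M × M => ((γ, p.1), p.2)) (by fun_prop))
      hyb fun h => hz (h z hzb)

theorem IsSigma.exists_unique_witness {R : Γ → Prop} (hR : IsSigma M (n + 1) R) :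
    ∃ P : Γ → M → Prop, IsSigma M (n + 1) (fun p : Γ × M => P p.1 p.2) ∧
      IsSigma M (n + 1) (fun p : Γ × M => ¬P p.1 p.2) ∧
      (∀ γ y y', P γ y → P γ y' → y = y') ∧ ∀ γ, R γ ↔ ∃ y, P γ y := by
  obtain ⟨L, hL, hRL⟩ := hR
  have hL' : IsSigma M n fun p : (Γ × M) × M => L (p.1.1, p.2) :=
    hL.comp (G := fun p : (Γ × M) × M => (p.1.1, p.2)) (by fun_prop)
  refine ⟨fun γ y => ¬L (γ, y) ∧ ∀ y' < y, L (γ, y'), hL.not.and (IsSigma.ball .snd hL').succ,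
    (hL.succ.or (.bex (R := fun (p : Γ × M) y' => ¬L (p.1, y')) (t := Prod.snd) .snd
      hL'.not)).congr fun p => ?_, ?_, fun γ => ?_⟩
  · push Not
    exact or_iff_not_imp_left
  · rintro γ y y' ⟨hy, hmin⟩ ⟨hy', hmin'⟩
    exact le_antisymm (le_of_not_gt fun h => hy' (hmin y' h)) (le_of_not_gt fun h => hy (hmin' y h))
  · refine (hRL γ).trans ⟨fun hne => ?_, fun ⟨y, hy, _⟩ => ⟨y, hy⟩⟩
    obtain ⟨y, hy, hmin⟩ := exists_minimal_of_isSigma_not (n := n) (A := fun y => ¬L (γ, y))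
      (by simpa only [not_not] using hL.comp (G := fun y => (γ, y)) (by fun_prop)) hne
    exact ⟨y, hy, fun y' hy' => not_not.1 (hmin y' hy')⟩

end Uniformization

section FiniteConjunction

variable {M Γ ι : Type} [CommSemiring M] [LinearOrder M] [PAMinus M] [Context M Γ] {n : ℕ}
  [SigmaInduction M n]

theorem IsSigma.forall_finite [Finite ι] {R : ι → Γ → Prop}
    (hR : ∀ i, IsSigma M (n + 1) (R i)) : IsSigma M (n + 1) fun γ => ∀ i, R i γ := by
  induction ι using Finite.induction_empty_option with
  | of_equiv e ih =>
    exact (ih fun a => hR (e a)).congr fun γ => e.forall_congr_right (q := fun i => R i γ)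
  | h_empty => exact (IsSigma.eq (.const (0 : M)) (.const 0)).congr fun γ => by simp
  | h_option ih =>
    exact ((hR none).and (ih fun a => hR (some a))).congr fun γ =>
      (Option.forall (p := fun o => R o γ)).symm

theorem IsSigma.exists_finite [Finite ι] {R : Γ → (ι → M) → Prop}
    (hR : IsSigma M (n + 1) fun p : Γ × (ι → M) => R p.1 p.2) :
    IsSigma M (n + 1) fun γ => ∃ z, R γ z := by
  induction ι using Finite.induction_empty_option generalizing Γ with
  | @of_equiv ι κ e ih =>
    have hG : IsPolyMap M fun p : Γ × (ι → M) => (p.1, fun b : κ => p.2 (e.symm b)) := by fun_prop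
    exact (ih (R := fun γ z => R γ (z ∘ e.symm)) (hR.comp hG)).congr fun γ =>
      (e.arrowCongr (.refl M)).exists_congr_right (q := R γ)
  | h_empty =>
    exact (hR.comp (G := fun γ : Γ => (γ, default)) (by fun_prop)).congr fun γ =>
      (Unique.exists_iff (p := R γ)).symm
  | @h_option ι _ ih =>
    have hG : IsPolyMap M fun p : (Γ × (ι → M)) × M =>
        (p.1.1, fun o : Option ι => o.elim p.2 p.1.2) :=
      .prodMk (by fun_prop) (.pi (Option.rec .snd fun i => by dsimp only [Option.elim]; fun_prop))
    refine (ih (R := fun γ z => ∃ y, R γ fun o => o.elim y z) (.ex (hR.comp hG))).congr fun γ => ?_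
    refine ⟨fun ⟨z, y, h⟩ => ⟨_, h⟩, fun ⟨z, h⟩ => ⟨fun i => z (some i), z none, ?_⟩⟩
    convert h with o
    cases o <;> rfl

end FiniteConjunction

section Formulas

variable {M α Γ : Type} [lang.Structure M] {k m n : ℕ}

theorem funMap_zero (v : Fin 0 → M) : Structure.funMap (L := lang) Func.zero v = 0 :=
  congrArg (Structure.funMap (L := lang) Func.zero) (Subsingleton.elim _ _)

theorem funMap_one (v : Fin 0 → M) : Structure.funMap (L := lang) Func.one v = 1 :=
  congrArg (Structure.funMap (L := lang) Func.one) (Subsingleton.elim _ _)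

theorem funMap_add (v : Fin 2 → M) :
    Structure.funMap (L := lang) Func.add v = v 0 + v 1 :=
  congrArg (Structure.funMap (L := lang) Func.add) (List.ofFn_injective rfl)

theorem funMap_mul (v : Fin 2 → M) :
    Structure.funMap (L := lang) Func.mul v = v 0 * v 1 :=
  congrArg (Structure.funMap (L := lang) Func.mul) (List.ofFn_injective rfl)

theorem relMap_lt (v : Fin 2 → M) :
    Structure.RelMap (L := lang) Rel.lt v ↔ v 0 < v 1 :=
  iff_of_eq (congrArg (Structure.RelMap (L := lang) Rel.lt) (List.ofFn_injective rfl))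

theorem realize_ltFm {t u : lang.Term (α ⊕ Fin k)} {v : α → M} {w : Fin k → M} :
    (ltFm t u).Realize v w ↔ t.realize (Sum.elim v w) < u.realize (Sum.elim v w) :=
  relMap_lt _

theorem realize_bdAll {t : lang.Term (α ⊕ Fin k)} {φ : lang.BoundedFormula α (k + 1)}
    {v : α → M} {w : Fin k → M} :
    (BoundedFormula.all ((ltFm (Term.var (Sum.inr (Fin.last k))) (t.liftAt 1 k)).imp φ)).Realize
      v w ↔ ∀ y < t.realize (Sum.elim v w), φ.Realize v (Fin.snoc w y) := by
  have hlift (y : M) : (t.liftAt 1 k).realize (Sum.elim v (Fin.snoc w y : Fin (k + 1) → M)) =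
      t.realize (Sum.elim v w) := by
    rw [Term.realize_liftAt]
    congr 1
    funext x
    rcases x with x | i
    · rfl
    · simp only [Function.comp_apply, Sum.map_inr, i.is_lt, if_true, Sum.elim_inr]
      exact Fin.snoc_castSucc (α := fun _ => M) y w i
  simp only [BoundedFormula.realize_all, BoundedFormula.realize_imp, realize_ltFm, hlift,
    Term.realize_var, Sum.elim_inr, Fin.snoc_last]

variable [Context M Γ]

theorem isPolyMap_realize (t : lang.Term α) {v : Γ → α → M} (hv : IsPolyMap M v) :
    IsPolyMap M fun γ => t.realize (v γ) := by
  induction t with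
  | var a => exact (IsPolyMap.apply (X := fun _ : α => M) a).comp hv
  | func F ts ih =>
    cases F with
    | zero => simpa only [Term.realize, funMap_zero] using IsPolyMap.const (0 : M)
    | one => simpa only [Term.realize, funMap_one] using IsPolyMap.const (1 : M)
    | add => simpa only [Term.realize, funMap_add] using! (ih 0).add (ih 1)
    | mul => simpa only [Term.realize, funMap_mul] using! (ih 0).mul (ih 1)

theorem IsDelta0.isBounded {φ : lang.BoundedFormula α k} (hφ : IsDelta0 k φ) :
    IsBounded M fun p : (α → M) × (Fin k → M) => φ.Realize p.1 p.2 := by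
  have hterm {k : ℕ} (t : lang.Term (α ⊕ Fin k)) : IsPolyMap M
      fun p : (α → M) × (Fin k → M) => t.realize (Sum.elim p.1 p.2) :=
    isPolyMap_realize t (.sumElim .fst .snd)
  induction hφ with
  | falsum => exact .falsum
  | equal k t u => exact .eq (hterm t) (hterm u)
  | rel k l R ts =>
    cases R with
    | lt =>
      simpa only [BoundedFormula.Realize, relMap_lt] using!
        IsBounded.lt (hterm (ts 0)) (hterm (ts 1))
  | imp k _ _ ihφ ihψ => exact .imp ihφ ihψ
  | bdAll k t _ ih =>
    simp only [realize_bdAll]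
    exact .ball (hterm t) (ih.comp (G := fun p : ((α → M) × (Fin k → M)) × M =>
      (p.1.1, (Fin.snoc p.1.2 p.2 : Fin (k + 1) → M))) (by fun_prop))

/-- Closure of the Σ_l relations, `1 ≤ l ≤ m`, under existential quantification. -/
def ExClosed (M : Type) [Add M] [Mul M] [LT M] (m : ℕ) : Prop :=
  ∀ l < m, ∀ {Γ : Type} [Context M Γ] {R : Γ → M → Prop},
    IsSigma M (l + 1) (fun p : Γ × M => R p.1 p.2) → IsSigma M (l + 1) fun γ => ∃ y, R γ y

omit [Context M Γ] in
mutual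

theorem SigmaFm.isSigma [Nonempty M] (hM : ExClosed M n) {m k : ℕ} (hmn : m ≤ n)
    {φ : lang.BoundedFormula α k} : SigmaFm m k φ →
      IsSigma M m fun p : (α → M) × (Fin k → M) => φ.Realize p.1 p.2
  | .delta0 _ _ hφ => .of_isBounded hφ.isBounded
  | .ofPi m _ hφ => by
    simpa only [not_not] using (PiFm.isSigma_not hM (by lia) hφ).not
  | .ex m _ hφ => by
    simp only [BoundedFormula.realize_ex]
    exact hM m hmn ((SigmaFm.isSigma hM hmn hφ).comp
      (G := fun p : ((α → M) × (Fin k → M)) × M =>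
        (p.1.1, (Fin.snoc p.1.2 p.2 : Fin (k + 1) → M))) (by fun_prop))

theorem PiFm.isSigma_not [Nonempty M] (hM : ExClosed M n) {m k : ℕ} (hmn : m ≤ n)
    {φ : lang.BoundedFormula α k} : PiFm m k φ →
      IsSigma M m fun p : (α → M) × (Fin k → M) => ¬φ.Realize p.1 p.2
  | .delta0 _ _ hφ => .of_isBounded hφ.isBounded.not
  | .ofSigma m _ hφ => (SigmaFm.isSigma hM (by lia) hφ).not
  | .all m _ hφ => by
    simp only [BoundedFormula.realize_all, not_forall]
    exact hM m hmn ((PiFm.isSigma_not hM hmn hφ).comp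
      (G := fun p : ((α → M) × (Fin k → M)) × M =>
        (p.1.1, (Fin.snoc p.1.2 p.2 : Fin (k + 1) → M))) (by fun_prop))

end

end Formulas

section FormulasOfRelations

variable {M Γ : Type} {m : ℕ}

/-- The coordinates of `v` provide every variable of the context `Γ` and every constant in the
list `s`, so that terms over them can express polynomials with parameters from `s`. -/
structure Supplies [Context M Γ] {β : Type} (s : List M) (v : Γ → β → M) : Prop where
  exists_var : ∀ x ∈ Context.vars, ∃ b, ∀ γ, x γ = v γ b
  exists_const : ∀ c ∈ s, ∃ b, ∀ γ, c = v γ b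

variable [Context M Γ] {α β : Type}

theorem Supplies.mono {s t : List M} {v : Γ → β → M} (h : Supplies t v) (hst : s ⊆ t) :
    Supplies s v where
  exists_var := h.exists_var
  exists_const c hc := h.exists_const c (hst hc)

theorem Supplies.snoc {s : List M} {k : ℕ} {v : Γ → α → M} {w : Γ → Fin k → M}
    (h : Supplies s fun γ => Sum.elim (v γ) (w γ)) :
    Supplies s fun p : Γ × M =>
      Sum.elim (v p.1) (Fin.snoc (w p.1) p.2 : Fin (k + 1) → M) := by
  have hlift : ∀ b : α ⊕ Fin k, ∃ b' : α ⊕ Fin (k + 1), ∀ p : Γ × M,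
      Sum.elim (v p.1) (w p.1) b =
        Sum.elim (v p.1) (Fin.snoc (w p.1) p.2 : Fin (k + 1) → M) b' := by
    rintro (a | i)
    · exact ⟨.inl a, fun _ => rfl⟩
    · exact ⟨.inr i.castSucc, fun _ => (Fin.snoc_castSucc (α := fun _ => M) ..).symm⟩
  constructor
  · rintro _ (⟨x, hx, rfl⟩ | ⟨_, rfl, rfl⟩)
    · obtain ⟨b, hb⟩ := h.exists_var x hx
      obtain ⟨b', hb'⟩ := hlift b
      exact ⟨b', fun p => (hb p.1).trans (hb' p)⟩
    · exact ⟨.inr (Fin.last k), fun p => (Fin.snoc_last (α := fun _ => M) ..).symm⟩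
  · intro c hc
    obtain ⟨b, hb⟩ := h.exists_const c hc
    obtain ⟨b', hb'⟩ := hlift b
    exact ⟨b', fun p => (hb p.1).trans (hb' p)⟩

variable [lang.Structure M]

theorem IsPoly.exists_term {t : Γ → M} (ht : IsPoly t) :
    ∃ s : List M, ∀ {β : Type} {v : Γ → β → M}, Supplies s v →
      ∃ τ : lang.Term β, ∀ γ, t γ = τ.realize (v γ) := by
  induction ht with
  | @var x hx =>
    refine ⟨[], fun hv => ?_⟩
    obtain ⟨b, hb⟩ := hv.exists_var x hx
    exact ⟨.var b, hb⟩
  | const c =>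
    refine ⟨[c], fun hv => ?_⟩
    obtain ⟨b, hb⟩ := hv.exists_const c (by simp)
    exact ⟨.var b, hb⟩
  | add _ _ ih₁ ih₂ =>
    obtain ⟨s₁, h₁⟩ := ih₁
    obtain ⟨s₂, h₂⟩ := ih₂
    refine ⟨s₁ ++ s₂, fun hv => ?_⟩
    obtain ⟨τ₁, hτ₁⟩ := h₁ (hv.mono (by simp))
    obtain ⟨τ₂, hτ₂⟩ := h₂ (hv.mono (by simp))
    exact ⟨.func (L := lang) Func.add ![τ₁, τ₂], fun γ => by
      simp [Term.realize, funMap_add, hτ₁, hτ₂]⟩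
  | mul _ _ ih₁ ih₂ =>
    obtain ⟨s₁, h₁⟩ := ih₁
    obtain ⟨s₂, h₂⟩ := ih₂
    refine ⟨s₁ ++ s₂, fun hv => ?_⟩
    obtain ⟨τ₁, hτ₁⟩ := h₁ (hv.mono (by simp))
    obtain ⟨τ₂, hτ₂⟩ := h₂ (hv.mono (by simp))
    exact ⟨.func (L := lang) Func.mul ![τ₁, τ₂], fun γ => by
      simp [Term.realize, funMap_mul, hτ₁, hτ₂]⟩

theorem IsBounded.exists_isDelta0 {R : Γ → Prop} (hR : IsBounded M R) :
    ∃ s : List M, ∀ {α : Type} {k : ℕ} {v : Γ → α → M} {w : Γ → Fin k → M},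
      Supplies s (fun γ => Sum.elim (v γ) (w γ)) →
        ∃ φ : lang.BoundedFormula α k, IsDelta0 k φ ∧ ∀ γ, R γ ↔ φ.Realize (v γ) (w γ) := by
  induction hR with
  | falsum => exact ⟨[], fun _ => ⟨_, .falsum _, fun _ => Iff.rfl⟩⟩
  | eq ht₁ ht₂ =>
    obtain ⟨s₁, h₁⟩ := (isPolyMap_iff.1 ht₁).exists_term
    obtain ⟨s₂, h₂⟩ := (isPolyMap_iff.1 ht₂).exists_term
    refine ⟨s₁ ++ s₂, fun hv => ?_⟩
    obtain ⟨τ₁, hτ₁⟩ := h₁ (hv.mono (by simp))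
    obtain ⟨τ₂, hτ₂⟩ := h₂ (hv.mono (by simp))
    exact ⟨_, .equal _ τ₁ τ₂, fun γ => by simp only [hτ₁, hτ₂]; exact Iff.rfl⟩
  | lt ht₁ ht₂ =>
    obtain ⟨s₁, h₁⟩ := (isPolyMap_iff.1 ht₁).exists_term
    obtain ⟨s₂, h₂⟩ := (isPolyMap_iff.1 ht₂).exists_term
    refine ⟨s₁ ++ s₂, fun hv => ?_⟩
    obtain ⟨τ₁, hτ₁⟩ := h₁ (hv.mono (by simp))
    obtain ⟨τ₂, hτ₂⟩ := h₂ (hv.mono (by simp))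
    exact ⟨ltFm τ₁ τ₂, .rel .., fun γ => by simp only [hτ₁, hτ₂, realize_ltFm]⟩
  | imp _ _ ih₁ ih₂ =>
    obtain ⟨s₁, h₁⟩ := ih₁
    obtain ⟨s₂, h₂⟩ := ih₂
    refine ⟨s₁ ++ s₂, fun hv => ?_⟩
    obtain ⟨φ, hφ, hφR⟩ := h₁ (hv.mono (by simp))
    obtain ⟨ψ, hψ, hψQ⟩ := h₂ (hv.mono (by simp))
    exact ⟨_, .imp _ hφ hψ, fun γ => imp_congr (hφR γ) (hψQ γ)⟩
  | ball ht _ ih =>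
    obtain ⟨s₁, h₁⟩ := (isPolyMap_iff.1 ht).exists_term
    obtain ⟨s₂, h₂⟩ := ih
    refine ⟨s₁ ++ s₂, fun hv => ?_⟩
    obtain ⟨τ, hτ⟩ := h₁ (hv.mono (by simp))
    obtain ⟨φ, hφ, hφR⟩ := h₂ (hv.mono (by simp)).snoc
    exact ⟨_, .bdAll _ τ hφ, fun γ => by simp only [realize_bdAll, hτ, hφR]⟩

theorem IsSigma.exists_sigmaFm {R : Γ → Prop} (hR : IsSigma M m R) :
    ∃ s : List M, ∀ {α : Type} {k : ℕ} {v : Γ → α → M} {w : Γ → Fin k → M},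
      Supplies s (fun γ => Sum.elim (v γ) (w γ)) →
        (∃ φ : lang.BoundedFormula α k, SigmaFm m k φ ∧ ∀ γ, R γ ↔ φ.Realize (v γ) (w γ)) ∧
          ∃ φ : lang.BoundedFormula α k, PiFm m k φ ∧ ∀ γ, ¬R γ ↔ φ.Realize (v γ) (w γ) := by
  induction m generalizing Γ with
  | zero =>
    obtain ⟨s, h⟩ := IsBounded.exists_isDelta0 hR
    refine ⟨s, fun hv => ?_⟩
    obtain ⟨φ, hφ, hφR⟩ := h hv
    exact ⟨⟨φ, .delta0 _ _ hφ, hφR⟩, φ.imp .falsum, .delta0 _ _ (.imp _ hφ (.falsum _)),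
      fun γ => not_congr (hφR γ)⟩
  | succ m ih =>
    obtain ⟨P, hP, hRP⟩ := hR
    obtain ⟨s, h⟩ := ih hP
    refine ⟨s, fun hv => ?_⟩
    obtain ⟨⟨φ, hφ, hφP⟩, ψ, hψ, hψP⟩ := h hv.snoc
    refine ⟨⟨ψ.ex, .ex _ _ (.ofPi _ _ hψ), fun γ => ?_⟩, φ.all, .all _ _ (.ofSigma _ _ hφ),
      fun γ => ?_⟩
    · simp only [hRP, hψP, BoundedFormula.realize_ex]
    · simp only [hRP, not_exists, not_not, hφP, BoundedFormula.realize_all]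

variable {k : ℕ}

theorem IsSigma.isSigmaDef {R : (Fin k → M) → Prop} (hR : IsSigma M m R) : IsSigmaDef m M R := by
  obtain ⟨s, h⟩ := hR.exists_sigmaFm
  obtain ⟨⟨φ, hφ, hφR⟩, -⟩ := h (α := Fin k ⊕ Fin s.length) (k := 0)
    (v := fun v => Sum.elim v s.get) (w := fun _ => finZeroElim) {
      exists_var := by
        rintro _ ⟨i, _, rfl, rfl⟩
        exact ⟨.inl (.inl i), fun _ => rfl⟩
      exists_const := fun c hc => by
        obtain ⟨i, rfl⟩ := List.get_of_mem hc
        exact ⟨.inl (.inr i), fun _ => rfl⟩ }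
  exact ⟨s.length, φ, s.get, hφ, hφR⟩

theorem IsSigmaDef.isSigma [Nonempty M] (hM : ExClosed M m) {R : (Fin k → M) → Prop}
    (hR : IsSigmaDef m M R) : IsSigma M m R := by
  obtain ⟨p, φ, w, hφ, hR⟩ := hR
  exact ((hφ.isSigma hM le_rfl).comp
    (G := fun v : Fin k → M => (Sum.elim v w, (finZeroElim : Fin 0 → M))) (by fun_prop)).congr
    fun v => (hR v).symm

theorem IsSigma.sigmaDef2 {R : M → M → Prop} (hR : IsSigma M m fun p : M × M => R p.1 p.2) :
    SigmaDef2 m M R :=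
  (hR.comp (G := fun v : Fin 2 → M => (v 0, v 1)) (by fun_prop)).isSigmaDef

theorem SigmaDef2.isSigma [Nonempty M] (hM : ExClosed M m) {R : M → M → Prop}
    (hR : SigmaDef2 m M R) : IsSigma M m fun p : M × M => R p.1 p.2 :=
  (IsSigmaDef.isSigma hM hR).comp (G := fun p : M × M => ![p.1, p.2])
    (.pi (Fin.forall_fin_two.2 ⟨.fst, .snd⟩))

end FormulasOfRelations

section Models

variable {M : Type} [lang.Structure M] {n : ℕ}

namespace PAm

/-- The semiring structure of a model of PA⁻, with the operations of the structure. -/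
abbrev commSemiring (hM : PAm M) : CommSemiring M where
  add_assoc := hM.add_assoc
  zero_add x := (hM.add_comm 0 x).trans (hM.add_zero x)
  add_zero := hM.add_zero
  add_comm := hM.add_comm
  nsmul := nsmulRec
  left_distrib := hM.ldistrib
  right_distrib x y z := by simp only [hM.mul_comm _ z, hM.ldistrib]
  zero_mul x := (hM.mul_comm 0 x).trans (hM.mul_zero x)
  mul_zero := hM.mul_zero
  mul_assoc := hM.mul_assoc
  one_mul x := (hM.mul_comm 1 x).trans (hM.mul_one x)
  mul_one := hM.mul_one
  mul_comm := hM.mul_comm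

open Classical in
/-- The order of a model of PA⁻, with the order relations of the structure. -/
noncomputable abbrev linearOrder (hM : PAm M) : LinearOrder M where
  le_refl x := .inr rfl
  le_trans x y z := by
    rintro (hxy | rfl) (hyz | rfl)
    exacts [.inl (hM.lt_trans x y z hxy hyz), .inl hxy, .inl hyz, .inr rfl]
  lt_iff_le_not_ge x y := by
    refine ⟨fun h => ⟨.inl h, ?_⟩, fun ⟨h, h'⟩ => h.resolve_right fun e => h' (.inr e.symm)⟩
    rintro (h' | rfl)
    exacts [hM.lt_irrefl x (hM.lt_trans x y x h h'), hM.lt_irrefl _ h]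
  le_antisymm x y := by
    rintro (hxy | rfl) (hyx | h)
    exacts [(hM.lt_irrefl x (hM.lt_trans x y x hxy hyx)).elim, h.symm, rfl, rfl]
  le_total x y := by
    rcases hM.lt_total x y with h | h | h
    exacts [.inl (.inl h), .inl (.inr h), .inr (.inl h)]
  toDecidableLE := inferInstance

theorem lt_add_one_iff (hM : PAm M) {x y : M} : x < y + 1 ↔ x ≤ y := by
  let := hM.commSemiring
  let := hM.linearOrder
  constructor
  · refine fun h => le_of_not_gt fun hyx => ?_
    obtain ⟨z, rfl⟩ := hM.sub_exists y x hyx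
    have hz : 0 < z := (hM.zero_le z).resolve_right (by rintro rfl; simp at hyx)
    have : 1 + y ≤ z + y := (hM.discrete z hz).imp (hM.add_lt_add 1 z y) (congrArg (· + y))
    exact this.not_gt (by rwa [hM.add_comm z, hM.add_comm 1])
  · have hy : y < y + 1 := by
      simpa only [hM.add_comm 0 y, hM.add_comm 1 y, hM.add_zero] using
        hM.add_lt_add 0 1 y hM.zero_lt_one
    exact fun h => h.trans_lt hy

theorem le_add_self (hM : PAm M) (a b : M) : a ≤ b + a := by
  let := hM.commSemiring
  rcases hM.zero_le b with h | rfl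
  · exact .inl (by simpa using hM.add_lt_add 0 b a h)
  · exact .inr (zero_add a).symm

theorem paMinus (hM : PAm M) : @PAMinus M hM.commSemiring hM.linearOrder :=
  let := hM.commSemiring
  let := hM.linearOrder
  { add_le_add_left := fun a b hab c => hab.imp (hM.add_lt_add a b c) (congrArg (· + c))
    le_of_add_le_add_left := fun a b c h => le_of_not_gt fun hcb =>
      h.not_gt (by simpa only [hM.add_comm a] using hM.add_lt_add c b a hcb)
    zero_le_one := hM.zero_le 1
    exists_pair_ne := ⟨0, 1, hM.zero_lt_one.ne⟩
    mul_lt_mul_of_pos_left := fun c hc a b h => by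
      simpa only [hM.mul_comm c] using hM.mul_lt_mul a b c h hc
    mul_lt_mul_of_pos_right := fun c hc a b h => hM.mul_lt_mul a b c h hc
    exists_add_of_le := by
      rintro a _ (h | rfl)
      · obtain ⟨c, rfl⟩ := hM.sub_exists _ _ h
        exact ⟨c, rfl⟩
      · exact ⟨0, (hM.add_zero a).symm⟩
    le_add_self := hM.le_add_self
    le_self_add := fun a b => by simpa only [hM.add_comm a] using hM.le_add_self a b
    lt_add_one_iff := hM.lt_add_one_iff }

end PAm

theorem ISig.sigmaInduction (hM : PAm M) (h : ISig n M) :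
    @SigmaInduction M hM.commSemiring hM.linearOrder n :=
  letI := hM.commSemiring
  letI := hM.linearOrder
  ⟨fun hA h0 hs => h _ (hA.comp (G := fun v : Fin 1 → M => v 0) (by fun_prop)).isSigmaDef h0 hs⟩

theorem PAm.exClosed (hM : PAm M) (h : ISig n M) : ExClosed M (n + 1) := by
  let := hM.commSemiring
  let := hM.linearOrder
  have := hM.paMinus
  have := h.sigmaInduction hM
  intro l hl Γ _ R hR
  have := SigmaInduction.mono (M := M) (Nat.lt_succ_iff.1 hl)
  exact IsSigma.ex hR

end Models

section Fair

namespace PAMinus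

variable {M : Type} [CommSemiring M] [LinearOrder M] [PAMinus M]

theorem mul_add_lt_mul {u v x y : M} (hu : u < y) (hv : v < x) : u * x + v < y * x :=
  calc u * x + v < u * x + x := by gcongr
    _ = (u + 1) * x := by rw [add_mul, one_mul]
    _ ≤ y * x := by
      gcongr
      exact lt_add_one_iff.1 (by gcongr)

theorem eq_of_mul_add_eq {u u' v v' x : M} (hv : v < x) (hv' : v' < x)
    (h : u * x + v = u' * x + v') : u = u' := by
  refine le_antisymm (le_of_not_gt fun hu => ?_) (le_of_not_gt fun hu => ?_)
  · exact ((mul_add_lt_mul hu hv').trans_le le_self_add).ne' h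
  · exact ((mul_add_lt_mul hu hv).trans_le le_self_add).ne h

theorem lt_one_add_one_iff {i : M} : i < 1 + 1 ↔ i = 0 ∨ i = 1 := by
  rw [lt_add_one_iff, le_iff_lt_or_eq, ← zero_add (1 : M), lt_add_one_iff, nonpos_iff_eq_zero,
    zero_add]

end PAMinus

variable {M : Type} {n : ℕ}

theorem exists_fair_homogeneous [CommSemiring M] [LinearOrder M] [PAMinus M] [SigmaInduction M n]
    {C : M → M → Prop} (hC : IsSigma M (n + 1) fun p : M × M => C p.1 p.2) {x : M}
    (htot : ∀ z < x * x, ∃ i < 1 + 1, C z i) :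
    ∃ H : M → M → Prop, IsSigma M (n + 1) (fun p : M × M => H p.1 p.2) ∧
      (∀ u < x, ∃ z < x * x, H u z) ∧ (∀ u z z', H u z → H u z' → z = z') ∧
      (∀ u u' z, H u z → H u' z → u = u') ∧ ∃ i, ∀ u < x, ∀ z, H u z → C z i := by
  by_cases hblock : ∃ u < x, ∀ v < x, C (u * x + v) 1
  · obtain ⟨u, hu, hblock⟩ := hblock
    exact ⟨fun v z => z = u * x + v, .eq .snd (by fun_prop),
      fun v hv => ⟨_, PAMinus.mul_add_lt_mul hu hv, rfl⟩, fun v z z' h h' => h.trans h'.symm,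
      fun v v' z h h' => add_left_cancel (h.symm.trans h'), 1, fun v hv z h => h ▸ hblock v hv⟩
  · obtain ⟨H, hH, hsub, huniq, hex⟩ := IsSigma.exists_uniformization (n := n)
      (R := fun u z => C z 0 ∧ ∃ v < x, z = u * x + v)
      (.and (hC.comp (G := fun p : M × M => (p.2, 0)) (by fun_prop))
        (.bex (by fun_prop) (.eq (by fun_prop) (by fun_prop))))
    refine ⟨H, hH, fun u hu => ?_, huniq, fun u u' z h h' => ?_, 0,
      fun u _ z h => (hsub u z h).1⟩
    · push Not at hblock
      obtain ⟨v, hv, hCv⟩ := hblock u hu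
      obtain ⟨i, hi, hCi⟩ := htot _ (PAMinus.mul_add_lt_mul hu hv)
      rcases PAMinus.lt_one_add_one_iff.1 hi with rfl | rfl
      · obtain ⟨z, hz⟩ := hex u ⟨_, hCi, v, hv, rfl⟩
        obtain ⟨-, w, hw, rfl⟩ := hsub u z hz
        exact ⟨_, PAMinus.mul_add_lt_mul hu hw, hz⟩
      · exact absurd hCi hCv
    · obtain ⟨-, v, hv, rfl⟩ := hsub u z h
      obtain ⟨-, v', hv', heq⟩ := hsub u' _ h'
      exact PAMinus.eq_of_mul_add_eq hv hv' heq

theorem fairFRT1_two [lang.Structure M] (hM : PAm M) (h : ISig n M) :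
    FairFRT1 M (n + 1) (1 + 1) := by
  let := hM.commSemiring
  let := hM.linearOrder
  have := hM.paMinus
  have := h.sigmaInduction hM
  intro x
  refine ⟨x * x, fun C ⟨hC, htot, _⟩ => ?_⟩
  obtain ⟨H, hH, hHtot, huniq, hinj, i, hi⟩ := exists_fair_homogeneous
    (hC.isSigma (hM.exClosed h)) htot
  exact ⟨H, ⟨hH.sigmaDef2, hHtot, fun u v v' _ => huniq u v v', fun u u' v _ _ => hinj u u' v⟩,
    i, fun u v hu => hi u hu v⟩

end Fair

section SigmaMap

variable {Γ Δ Θ : Type} [Context ℕ Γ] [Context ℕ Δ] [Context ℕ Θ] {m : ℕ}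

/-- Maps between contexts over ℕ under whose substitution the Σ_{m+1} relations are closed, also
in the presence of further variables. -/
@[fun_prop]
structure IsSigmaMap (m : ℕ) (F : Γ → Δ) : Prop where
  subst {Θ : Type} [Context ℕ Θ] {R : Θ × Δ → Prop} :
    IsSigma ℕ (m + 1) R → IsSigma ℕ (m + 1) fun p : Θ × Γ => R (p.1, F p.2)

theorem IsSigma.comp_isSigmaMap {R : Δ → Prop} (hR : IsSigma ℕ (m + 1) R) {F : Γ → Δ}
    (hF : IsSigmaMap m F) : IsSigma ℕ (m + 1) fun γ => R (F γ) :=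
  (hF.subst (Θ := Γ) (R := fun p => R p.2) (hR.comp .snd)).comp (G := fun γ => (γ, γ)) (by fun_prop)

@[fun_prop]
theorem IsPolyMap.isSigmaMap {F : Γ → Δ} (hF : IsPolyMap ℕ F) : IsSigmaMap m F :=
  ⟨fun {Θ _ _} hR => hR.comp (G := fun p : Θ × Γ => (p.1, F p.2)) (by fun_prop)⟩

namespace IsSigmaMap

@[fun_prop]
theorem id : IsSigmaMap m fun γ : Γ => γ := IsPolyMap.id.isSigmaMap

@[fun_prop]
theorem const (d : Δ) : IsSigmaMap m fun _ : Γ => d := (IsPolyMap.const d).isSigmaMap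

@[fun_prop]
theorem comp {G : Δ → Θ} {F : Γ → Δ} (hG : IsSigmaMap m G) (hF : IsSigmaMap m F) :
    IsSigmaMap m fun γ => G (F γ) := ⟨fun hR => hF.subst (hG.subst hR)⟩

@[fun_prop]
theorem fst : IsSigmaMap m (Prod.fst : Γ × Δ → Γ) := IsPolyMap.fst.isSigmaMap

@[fun_prop]
theorem snd : IsSigmaMap m (Prod.snd : Γ × Δ → Δ) := IsPolyMap.snd.isSigmaMap

@[fun_prop]
theorem prodMk {F : Γ → Δ} {G : Γ → Θ} (hF : IsSigmaMap m F) (hG : IsSigmaMap m G) :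
    IsSigmaMap m fun γ => (F γ, G γ) := by
  refine ⟨fun {Ξ _ R} hR => ?_⟩
  have hR₁ : IsSigma ℕ (m + 1) fun p : (Ξ × Δ) × Γ => R (p.1.1, p.1.2, G p.2) :=
    hG.subst (hR.comp (G := fun p : (Ξ × Δ) × Θ => (p.1.1, p.1.2, p.2)) (by fun_prop))
  have hR₂ : IsSigma ℕ (m + 1) fun p : (Ξ × Γ) × Γ => R (p.1.1, F p.2, G p.1.2) :=
    hF.subst (R := fun q : (Ξ × Γ) × Δ => R (q.1.1, q.2, G q.1.2)) <|
      (hR₁.comp (G := fun p : (Ξ × Γ) × Δ => ((p.1.1, p.2), p.1.2)) (by fun_prop))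
  exact hR₂.comp (G := fun p : Ξ × Γ => (p, p.2)) (by fun_prop)

theorem of_graph {f : Γ → ℕ} (hf : IsSigma ℕ (m + 1) fun p : Γ × ℕ => p.2 = f p.1) :
    IsSigmaMap m f := ⟨fun {Ξ _ R} hR =>
  (IsSigma.ex (R := fun (p : Ξ × Γ) y => y = f p.2 ∧ R (p.1, y))
    ((hf.comp (G := fun p : (Ξ × Γ) × ℕ => (p.1.2, p.2)) (by fun_prop)).and
      (hR.comp (G := fun p : (Ξ × Γ) × ℕ => (p.1.1, p.2)) (by fun_prop)))).congr
    fun _ => by simp⟩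

variable {s t : Γ → ℕ}

theorem eq (hs : IsSigmaMap m s) (ht : IsSigmaMap m t) :
    IsSigma ℕ (m + 1) fun γ => s γ = t γ := (IsSigma.eq .fst .snd).comp_isSigmaMap (hs.prodMk ht)

theorem lt (hs : IsSigmaMap m s) (ht : IsSigmaMap m t) :
    IsSigma ℕ (m + 1) fun γ => s γ < t γ := (IsSigma.lt .fst .snd).comp_isSigmaMap (hs.prodMk ht)

theorem ball (ht : IsSigmaMap m t) {R : Γ → ℕ → Prop}
    (hR : IsSigma ℕ (m + 1) fun p : Γ × ℕ => R p.1 p.2) :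
    IsSigma ℕ (m + 1) fun γ => ∀ y < t γ, R γ y :=
  (IsSigma.ball (t := fun p : Γ × ℕ => p.2) (R := fun p y => R p.1 y) .snd
    (hR.comp (G := fun p : (Γ × ℕ) × ℕ => (p.1.1, p.2)) (by fun_prop))).comp_isSigmaMap
    (F := fun γ => (γ, t γ)) (id.prodMk ht)

@[fun_prop]
theorem add (hs : IsSigmaMap m s) (ht : IsSigmaMap m t) : IsSigmaMap m fun γ => s γ + t γ :=
  (IsPolyMap.add (M := ℕ) .fst .snd).isSigmaMap.comp (hs.prodMk ht)

@[fun_prop]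
theorem mul (hs : IsSigmaMap m s) (ht : IsSigmaMap m t) : IsSigmaMap m fun γ => s γ * t γ :=
  (IsPolyMap.mul (M := ℕ) .fst .snd).isSigmaMap.comp (hs.prodMk ht)

open Classical in
theorem ite {P : Γ → Prop} (hP : IsSigma ℕ (m + 1) P) (hP' : IsSigma ℕ (m + 1) fun γ => ¬P γ)
    (hs : IsSigmaMap m s) (ht : IsSigmaMap m t) : IsSigmaMap m fun γ => if P γ then s γ else t γ :=
  .of_graph <| (IsSigma.or (n := m) (M := ℕ)
    ((hP.comp .fst).and (IsSigmaMap.eq .snd (hs.comp .fst)))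
    ((hP'.comp .fst).and (IsSigmaMap.eq .snd (ht.comp .fst)))).congr fun p => by
      split <;> simp_all

@[fun_prop]
theorem natPair (hs : IsSigmaMap m s) (ht : IsSigmaMap m t) :
    IsSigmaMap m fun γ => Nat.pair (s γ) (t γ) := by
  have h : IsSigmaMap m fun p : ℕ × ℕ => Nat.pair p.1 p.2 := .of_graph <| by
    refine (IsSigma.or (n := m) (M := ℕ)
      ((IsSigma.lt (s := fun p : (ℕ × ℕ) × ℕ => p.1.1) (t := fun p => p.1.2) (by fun_prop)
        (by fun_prop)).and (.eq (t := fun p => p.1.2 * p.1.2 + p.1.1) .snd (by fun_prop)))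
      ((IsSigma.lt (s := fun p : (ℕ × ℕ) × ℕ => p.1.2) (t := fun p => p.1.1 + 1) (by fun_prop)
        (by fun_prop)).and
          (.eq (t := fun p => p.1.1 * p.1.1 + p.1.1 + p.1.2) .snd (by fun_prop)))).congr fun p => ?_
    unfold Nat.pair
    split <;> lia
  exact h.comp (hs.prodMk ht)

@[fun_prop]
theorem unpair (ht : IsSigmaMap m t) : IsSigmaMap m fun γ => (t γ).unpair := by
  have hfst : IsSigmaMap m fun x : ℕ => x.unpair.1 := .of_graph <|
    (IsSigma.ex (R := fun (p : ℕ × ℕ) y => Nat.pair p.2 y = p.1)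
      (IsSigmaMap.eq (by fun_prop) (by fun_prop))).congr fun p =>
        ⟨fun ⟨y, hy⟩ => by simp [← hy], fun h => ⟨p.1.unpair.2, by simp [h]⟩⟩
  have hsnd : IsSigmaMap m fun x : ℕ => x.unpair.2 := .of_graph <|
    (IsSigma.ex (R := fun (p : ℕ × ℕ) x => Nat.pair x p.2 = p.1)
      (IsSigmaMap.eq (by fun_prop) (by fun_prop))).congr fun p =>
        ⟨fun ⟨y, hy⟩ => by simp [← hy], fun h => ⟨p.1.unpair.1, by simp [h]⟩⟩
  exact (hfst.comp ht).prodMk (hsnd.comp ht)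

@[fun_prop]
theorem beta (hs : IsSigmaMap m s) (ht : IsSigmaMap m t) :
    IsSigmaMap m fun γ => Nat.beta (s γ) (t γ) := by
  have h : IsSigmaMap m fun p : ℕ × ℕ => p.1 % (p.2 + 1) := .of_graph <|
    (IsSigma.and (n := m) (IsSigma.lt (s := fun p : (ℕ × ℕ) × ℕ => p.2) (t := fun p => p.1.2 + 1)
      .snd (by fun_prop)) (.ex (R := fun p q => p.1.1 = q * (p.1.2 + 1) + p.2)
        (.eq (by fun_prop) (by fun_prop)))).congr fun p => by
      constructor
      · rintro ⟨hlt, q, hq⟩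
        rw [hq, mul_comm, Nat.mul_add_mod, Nat.mod_eq_of_lt hlt]
      · rintro h
        exact ⟨h ▸ Nat.mod_lt _ (Nat.succ_pos _), p.1.1 / (p.1.2 + 1),
          by rw [h, mul_comm, Nat.div_add_mod]⟩
  unfold Nat.beta
  exact h.comp (F := fun γ => ((s γ).unpair.1, (t γ + 1) * (s γ).unpair.2)) (by fun_prop)

end IsSigmaMap

theorem exists_beta_eq (u : ℕ → ℕ) (k : ℕ) : ∃ s, ∀ i ≤ k, Nat.beta s i = u i := by
  refine ⟨Nat.unbeta ((List.range (k + 1)).map u), fun i hi => ?_⟩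
  simpa using Nat.beta_unbeta_coe ((List.range (k + 1)).map u) ⟨i, by simpa using by lia⟩

theorem natRec_eq_iff_exists_beta {b : ℕ} {g : ℕ → ℕ → ℕ} {k y : ℕ} :
    y = Nat.rec b g k ↔ ∃ s, Nat.beta s 0 = b ∧
      (∀ i < k, Nat.beta s (i + 1) = g i (Nat.beta s i)) ∧ Nat.beta s k = y := by
  constructor
  · rintro rfl
    obtain ⟨s, hs⟩ := exists_beta_eq (Nat.rec b g) k
    exact ⟨s, hs 0 k.zero_le, fun i hi => by rw [hs _ hi, hs i hi.le], hs k le_rfl⟩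
  · rintro ⟨s, h0, hs, rfl⟩
    suffices ∀ i ≤ k, Nat.beta s i = Nat.rec b g i from this k le_rfl
    intro i hi
    induction i with
    | zero => exact h0
    | succ i ih => rw [hs i hi, ih (by lia)]

theorem IsSigmaMap.natRec {b : Γ → ℕ} {g : Γ → ℕ → ℕ → ℕ} (hb : IsSigmaMap m b)
    (hg : IsSigmaMap m fun p : Γ × ℕ × ℕ => g p.1 p.2.1 p.2.2) :
    IsSigmaMap m fun p : Γ × ℕ => (Nat.rec (b p.1) (g p.1) p.2 : ℕ) := by
  refine .of_graph ?_
  simp only [natRec_eq_iff_exists_beta]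
  refine .ex (.and (eq (by fun_prop) (by fun_prop)) (.and (ball (by fun_prop) (eq (by fun_prop)
    ?_)) (eq (by fun_prop) (by fun_prop))))
  exact hg.comp (F := fun p : (((Γ × ℕ) × ℕ) × ℕ) × ℕ =>
    (p.1.1.1.1, p.2, Nat.beta p.1.2 p.2)) (by fun_prop)

theorem isSigmaMap_of_natPrimrec {f : ℕ → ℕ} (hf : Nat.Primrec f) : IsSigmaMap m f := by
  induction hf with
  | zero => exact .const 0
  | succ => exact .add .id (.const 1)
  | left => exact .comp .fst (.unpair .id)
  | right => exact .comp .snd (.unpair .id)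
  | pair _ _ ihf ihg => exact ihf.natPair ihg
  | comp _ _ ihf ihg => exact ihf.comp ihg
  | @prec f g _ _ ihf ihg =>
    have hrec : IsSigmaMap m fun p : ℕ × ℕ =>
        (Nat.rec (f p.1) (fun y z => g (Nat.pair p.1 (Nat.pair y z))) p.2 : ℕ) :=
      ihf.natRec (g := fun a y z => g (Nat.pair a (Nat.pair y z))) (ihg.comp (by fun_prop))
    exact hrec.comp (.unpair .id)

theorem IsSigmaMap.encode_primrec_comp {α β : Type} [Primcodable α] [Primcodable β] {f : α → β}
    (hf : Primrec f) {a : Γ → α} (ha : IsSigmaMap m fun γ => Encodable.encode (a γ)) :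
    IsSigmaMap m fun γ => Encodable.encode (f (a γ)) := by
  simpa only [Function.comp_def, Encodable.encodek, Option.map_some, Encodable.encode_some,
    Nat.succ_eq_add_one, Nat.pred_eq_sub_one, Nat.add_sub_cancel] using
    ((isSigmaMap_of_natPrimrec Nat.Primrec.pred).comp (isSigmaMap_of_natPrimrec hf)).comp ha

end SigmaMap

section Universal

open Nat.Partrec (Code)

/-- Universal relations for the arithmetical hierarchy: for `m ≥ 1` the relations
`Universal m e` on ℕ are, as `e` varies, all the Σ_m sets. Level `0` says that the machine with
code `e`, run on input `x.unpair.1`, has not halted within `x.unpair.2` steps. -/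
def Universal : ℕ → ℕ → ℕ → Prop
  | 0, e, x => Code.evaln x.unpair.2 (Denumerable.ofNat Code e) x.unpair.1 = none
  | m + 1, e, x => ∃ y, ¬Universal m e (Nat.pair x y)

theorem exists_isSigmaMap_eq_zero_iff_universal (m : ℕ) :
    ∃ f : ℕ → ℕ, IsSigmaMap m f ∧ ∀ e x, f (Nat.pair e x) = 0 ↔ Universal 0 e x := by
  have hx : Primrec fun z : ℕ => z.unpair.2.unpair := .comp .unpair (.comp .snd .unpair)
  refine ⟨_, isSigmaMap_of_natPrimrec (Primrec.nat_iff.1 <| Primrec.encode.comp <|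
    Code.primrec_evaln.comp (((Primrec.snd.comp hx).pair ((Primrec.ofNat Code).comp
      (Primrec.fst.comp .unpair))).pair (Primrec.fst.comp hx))), fun e x => ?_⟩
  rw [Nat.unpair_pair, Universal]
  cases Code.evaln x.unpair.2 (Denumerable.ofNat Code e) x.unpair.1 <;> simp

theorem isSigma_universal (m : ℕ) :
    IsSigma ℕ (m + 1) fun p : ℕ × ℕ => Universal (m + 1) p.1 p.2 := by
  suffices h : IsSigma ℕ (m + 1) fun p : ℕ × ℕ => ¬Universal m p.1 p.2 from
    .ex (R := fun (p : ℕ × ℕ) y => ¬Universal m p.1 (Nat.pair p.2 y)) <| h.comp_isSigmaMap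
      (F := fun q : (ℕ × ℕ) × ℕ => (q.1.1, Nat.pair q.1.2 q.2)) (by fun_prop)
  cases m with
  | zero =>
    obtain ⟨f, hf, h⟩ := exists_isSigmaMap_eq_zero_iff_universal 0
    simp only [← h, ← Nat.pos_iff_ne_zero]
    exact IsSigmaMap.lt (.const 0)
      (hf.comp (F := fun p : ℕ × ℕ => Nat.pair p.1 p.2) (by fun_prop))
  | succ m => exact (isSigma_universal m).not

theorem IsPoly.primrec {Γ α : Type} [Context ℕ Γ] [Primcodable α] {t : Γ → ℕ} (ht : IsPoly t)
    {G : α → Γ} (hG : ∀ x ∈ Context.vars (M := ℕ), Primrec (x ∘ G)) :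
    Primrec (t ∘ G) := by
  induction ht with
  | var hx => exact hG _ hx
  | const c => exact .const c
  | add _ _ hs ht => exact Primrec.nat_add.comp hs ht
  | mul _ _ hs ht => exact Primrec.nat_mul.comp hs ht

theorem IsBounded.primrecPred {Γ α : Type} [Context ℕ Γ] [Primcodable α] {R : Γ → Prop}
    (hR : IsBounded ℕ R) {G : α → Γ} (hG : ∀ x ∈ Context.vars (M := ℕ), Primrec (x ∘ G)) :
    PrimrecPred fun a => R (G a) := by
  induction hR generalizing α with
  | falsum => exact ⟨fun _ => instDecidableFalse, .const _⟩
  | eq hs ht =>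
    exact Primrec.eq.comp ((isPolyMap_iff.1 hs).primrec hG) ((isPolyMap_iff.1 ht).primrec hG)
  | lt hs ht =>
    exact Primrec.nat_lt.comp ((isPolyMap_iff.1 hs).primrec hG) ((isPolyMap_iff.1 ht).primrec hG)
  | imp _ _ ihR ihQ => exact ((ihR hG).not.or (ihQ hG)).of_eq fun a => imp_iff_not_or.symm
  | @ball Γ _ t R ht _ ih =>
    have hR' : PrimrecRel fun (y : ℕ) (a : α) => R (G a, y) := by
      refine ih (G := fun p : ℕ × α => (G p.2, p.1)) ?_
      rintro _ (⟨x, hx, rfl⟩ | ⟨x, rfl, rfl⟩)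
      exacts [(hG x hx).comp .snd, .fst]
    exact (hR'.forall_mem_list.comp
      (Primrec.list_range.comp ((isPolyMap_iff.1 ht).primrec hG)) .id).of_eq fun _ => by simp

theorem exists_code_dom_iff {P : ℕ × ℕ → Prop} (hP : IsBounded ℕ P) :
    ∃ c : Code, ∀ x, (c.eval x).Dom ↔ ∃ y, ¬P (x, y) := by
  obtain ⟨_, hP'⟩ := (hP.primrecPred (G := fun p => p) <| by
    rintro _ (⟨x, rfl, rfl⟩ | ⟨x, rfl, rfl⟩)
    exacts [.fst, .snd]).not
  obtain ⟨c, hc⟩ := Code.exists_code.1 <| Partrec.nat_iff.1 <|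
    Partrec.rfind (p := fun x y => Part.some (decide ¬P (x, y))) hP'.to_comp.partrec
  refine ⟨c, fun x => ?_⟩
  rw [hc]
  exact Nat.rfind_dom.trans (exists_congr fun y => by simp)

theorem exists_universal_iff {m : ℕ} {R : ℕ → Prop} (hR : IsSigma ℕ (m + 1) R) :
    ∃ e, ∀ x, R x ↔ Universal (m + 1) e x := by
  obtain ⟨P, hP, h⟩ := hR
  simp only [h]
  induction m generalizing R P with
  | zero =>
    obtain ⟨c, hc⟩ := exists_code_dom_iff hP
    refine ⟨Encodable.encode c, fun x => ?_⟩
    simp only [← hc, Part.dom_iff_mem, Code.evaln_complete, Universal, Nat.unpair_pair,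
      Denumerable.ofNat_encode, Option.ne_none_iff_exists', Option.mem_def]
    exact exists_comm
  | succ m ih =>
    obtain ⟨Q, hQ, hPQ⟩ : IsSigma ℕ (m + 1) fun z : ℕ => P z.unpair :=
      IsSigma.comp_isSigmaMap hP (by fun_prop)
    obtain ⟨e, he⟩ := ih (R := fun z => P z.unpair) Q hQ hPQ
    exact ⟨e, fun x => exists_congr fun y => by rw [← he, ← hPQ]; simp only [Nat.unpair_pair]⟩

theorem exists_universal_function (n : ℕ) : ∃ D : ℕ → ℕ → ℕ → Prop,
    IsSigma ℕ (n + 1) (fun p : (ℕ × ℕ) × ℕ => D p.1.1 p.1.2 p.2) ∧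
    (∀ i e x x', D i e x → D i e x' → x = x') ∧
    ∀ G : ℕ → ℕ → Prop, IsSigma ℕ (n + 1) (fun p : ℕ × ℕ => G p.1 p.2) →
      ∃ e, ∀ i x, (∀ x', G i x' ↔ x' = x) → D i e x := by
  have hU : IsSigma ℕ (n + 1) fun p : (ℕ × ℕ) × ℕ => Universal (n + 1) p.1.2 (Nat.pair p.1.1 p.2) :=
    (isSigma_universal n).comp_isSigmaMap
      (F := fun p : (ℕ × ℕ) × ℕ => (p.1.2, Nat.pair p.1.1 p.2)) (by fun_prop)
  obtain ⟨D, hD, hDU, hfun, htot⟩ := IsSigma.exists_uniformization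
    (R := fun (p : ℕ × ℕ) x => Universal (n + 1) p.2 (Nat.pair p.1 x)) hU
  refine ⟨fun i e => D (i, e), hD, fun i e => hfun (i, e), fun G hG => ?_⟩
  obtain ⟨e, he⟩ := exists_universal_iff (R := fun z => G z.unpair.1 z.unpair.2)
    (hG.comp_isSigmaMap (F := fun z : ℕ => z.unpair) (by fun_prop))
  refine ⟨e, fun i x hx => ?_⟩
  have hUG (x') : Universal (n + 1) e (Nat.pair i x') ↔ x' = x := by simp [← he, hx]
  obtain ⟨x', hx'⟩ := htot (i, e) ⟨x, (hUG x).2 rfl⟩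
  exact (hUG x').1 (hDU _ _ hx') ▸ hx'

end Universal

section StructureOf

/-- An ordered semiring as a structure for the language of arithmetic. It is not an instance, so
that the operations of ℕ keep their usual meaning. -/
abbrev structureOf (M : Type) [CommSemiring M] [LT M] : lang.Structure M where
  funMap := @fun
    | _, .zero, _ => 0
    | _, .one, _ => 1
    | _, .add, v => v 0 + v 1
    | _, .mul, v => v 0 * v 1
  RelMap := @fun
    | _, .lt, v => v 0 < v 1

theorem pam_structureOf (M : Type) [CommSemiring M] [LinearOrder M] [PAMinus M] :
    @PAm M (structureOf M) :=
  have ldistrib (x y z : M) : x * (y + z) = x * y + x * z := mul_add x y z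
  have add_lt_add (x y z : M) (h : x < y) : x + z < y + z := by gcongr
  have mul_lt_mul (x y z : M) (h : x < y) (hz : 0 < z) : x * z < y * z := by gcongr
  have sub_exists (x y : M) (h : x < y) : ∃ z, x + z = y :=
    (exists_add_of_le h.le).imp fun _ => Eq.symm
  have one_le (x : M) (hx : 0 < x) : 1 ≤ x := PAMinus.lt_add_one_iff.1 (by simpa using hx)
  @PAm.mk M (structureOf M) add_assoc add_comm mul_assoc mul_comm ldistrib add_zero mul_zero
    mul_one (fun _ _ _ => lt_trans) lt_irrefl lt_trichotomy add_lt_add mul_lt_mul sub_exists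
    zero_lt_one (fun x hx => le_iff_lt_or_eq.1 (one_le x hx)) (fun _ => le_iff_lt_or_eq.1 zero_le)

end StructureOf

section Realize

variable {α : Type} {k m : ℕ}

/-- Satisfaction in the standard model. -/
def NatRealize (φ : lang.BoundedFormula α k) (v : α → ℕ) (w : Fin k → ℕ) : Prop :=
  @BoundedFormula.Realize lang ℕ (structureOf ℕ) α k φ v w

theorem exClosed_nat (m : ℕ) : ExClosed ℕ m := fun _ _ _ _ _ hR => .ex hR

theorem SigmaFm.isSigma_natRealize {φ : lang.BoundedFormula α k} (hφ : SigmaFm m k φ) :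
    IsSigma ℕ m fun p : (α → ℕ) × (Fin k → ℕ) => NatRealize φ p.1 p.2 :=
  letI := structureOf ℕ
  hφ.isSigma (M := ℕ) (exClosed_nat m) le_rfl

theorem PiFm.isSigma_not_natRealize {φ : lang.BoundedFormula α k} (hφ : PiFm m k φ) :
    IsSigma ℕ m fun p : (α → ℕ) × (Fin k → ℕ) => ¬NatRealize φ p.1 p.2 :=
  letI := structureOf ℕ
  hφ.isSigma_not (M := ℕ) (exClosed_nat m) le_rfl

end Realize

section Hull

open Filter

variable {n : ℕ}

/-- The sequences whose germs form the Σ_{n+1}-hull of the germ of the identity in the ultrapower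
of ℕ by a nonprincipal ultrafilter: those defined almost everywhere, uniformly in the index, by a
Σ_{n+1} relation. -/
def IsHullFun (n : ℕ) (f : ℕ → ℕ) : Prop :=
  ∃ G : ℕ → ℕ → Prop, IsSigma ℕ (n + 1) (fun p : ℕ × ℕ => G p.1 p.2) ∧
    ∀ᶠ i in hyperfilter ℕ, ∀ x, G i x ↔ x = f i

namespace IsHullFun

theorem exists_skolem {ι : Type} [Finite ι] {f : ι → ℕ → ℕ} (hf : ∀ j, IsHullFun n (f j))
    {R : ℕ → (ι → ℕ) → ℕ → Prop}
    (hR : IsSigma ℕ (n + 1) fun p : (ℕ × (ι → ℕ)) × ℕ => R p.1.1 p.1.2 p.2)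
    (h : ∀ᶠ i in hyperfilter ℕ, ∃ y, R i (f · i) y) :
    ∃ g, IsHullFun n g ∧ ∀ᶠ i in hyperfilter ℕ, R i (f · i) (g i) := by
  choose G hG hGf using hf
  have hGf : ∀ᶠ i in hyperfilter ℕ, ∀ z : ι → ℕ, (∀ j, G j i (z j)) ↔ z = (f · i) :=
    (eventually_all.2 hGf).mono fun i hi z => by simp only [hi, funext_iff]
  have hRG : IsSigma ℕ (n + 1) fun p : ℕ × ℕ =>
      ∃ z : ι → ℕ, (∀ j, G j p.1 (z j)) ∧ R p.1 z p.2 :=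
    .exists_finite (.and
      (.forall_finite fun j => (hG j).comp (G := fun p : (ℕ × ℕ) × (ι → ℕ) => (p.1.1, p.2 j))
        (by fun_prop))
      (hR.comp (G := fun p : (ℕ × ℕ) × (ι → ℕ) => ((p.1.1, p.2), p.1.2)) (by fun_prop)))
  obtain ⟨Q, hQ, hQR, hQu, hQe⟩ := IsSigma.exists_uniformization
    (R := fun i y => ∃ z : ι → ℕ, (∀ j, G j i (z j)) ∧ R i z y) hRG
  obtain ⟨g, hg⟩ : ∃ g : ℕ → ℕ, ∀ᶠ i in hyperfilter ℕ, Q i (g i) := by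
    refine Eventually.choice ?_
    filter_upwards [h, hGf] with i ⟨y, hy⟩ hi
    exact hQe i ⟨y, _, (hi _).2 rfl, hy⟩
  refine ⟨g, ⟨Q, hQ, hg.mono fun i hi x => ⟨fun hx => hQu i x _ hx hi, ?_⟩⟩, ?_⟩
  · rintro rfl
    exact hi
  · filter_upwards [hg, hGf] with i hi hGi
    obtain ⟨z, hz, hR⟩ := hQR i _ hi
    rwa [(hGi z).1 hz] at hR

theorem of_isSigmaMap {ι : Type} [Finite ι] {f : ι → ℕ → ℕ} (hf : ∀ j, IsHullFun n (f j))
    {t : ℕ × (ι → ℕ) → ℕ} (ht : IsSigmaMap n t) : IsHullFun n fun i => t (i, (f · i)) := by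
  obtain ⟨g, hg, hgt⟩ := exists_skolem hf (R := fun i z y => y = t (i, z))
    (IsSigmaMap.eq .snd (ht.comp .fst))
    (.of_forall fun i => ⟨_, rfl⟩)
  obtain ⟨G, hG, hGg⟩ := hg
  exact ⟨G, hG, by filter_upwards [hgt, hGg] with i hi hGi x using by rw [hGi, hi]⟩

theorem of_isSigmaMap_index {t : ℕ → ℕ} (ht : IsSigmaMap n t) : IsHullFun n t :=
  of_isSigmaMap (ι := Empty) (f := nofun) nofun (ht.comp .fst)

theorem const (c : ℕ) : IsHullFun n fun _ => c := of_isSigmaMap_index (.const c)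

theorem add {f g : ℕ → ℕ} (hf : IsHullFun n f) (hg : IsHullFun n g) : IsHullFun n (f + g) :=
  of_isSigmaMap (f := ![f, g]) (Fin.forall_fin_two.2 ⟨hf, hg⟩) (t := fun p => p.2 0 + p.2 1)
    (by fun_prop)

theorem mul {f g : ℕ → ℕ} (hf : IsHullFun n f) (hg : IsHullFun n g) : IsHullFun n (f * g) :=
  of_isSigmaMap (f := ![f, g]) (Fin.forall_fin_two.2 ⟨hf, hg⟩) (t := fun p => p.2 0 * p.2 1)
    (by fun_prop)

end IsHullFun

/-- The germs of the hull functions. -/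
def hullSubsemiring (n : ℕ) : Subsemiring ((hyperfilter ℕ : Filter ℕ).Germ ℕ) where
  carrier := {x | ∃ f, IsHullFun n f ∧ f = x}
  zero_mem' := ⟨_, .const 0, rfl⟩
  one_mem' := ⟨_, .const 1, rfl⟩
  add_mem' := by
    rintro _ _ ⟨f, hf, rfl⟩ ⟨g, hg, rfl⟩
    exact ⟨_, hf.add hg, rfl⟩
  mul_mem' := by
    rintro _ _ ⟨f, hf, rfl⟩ ⟨g, hg, rfl⟩
    exact ⟨_, hf.mul hg, rfl⟩

instance (n : ℕ) : PAMinus (hullSubsemiring n) where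
  exists_add_of_le := by
    rintro ⟨_, f, hf, rfl⟩ ⟨_, g, hg, rfl⟩ hfg
    obtain ⟨h, hh, hfh⟩ := IsHullFun.exists_skolem (f := ![f, g]) (Fin.forall_fin_two.2 ⟨hf, hg⟩)
      (R := fun _ z y => z 1 = z 0 + y) (.eq (by fun_prop) (by fun_prop))
      ((Germ.coe_le.1 hfg).mono fun i hi => exists_add_of_le hi)
    exact ⟨⟨h, h, hh, rfl⟩, Subtype.ext (Germ.coe_eq.2 hfh)⟩
  le_add_self x y := (le_add_self : x.1 ≤ y.1 + x.1)
  le_self_add x y := (le_self_add : x.1 ≤ x.1 + y.1)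
  lt_add_one_iff := by
    rintro ⟨_, f, hf, rfl⟩ ⟨_, g, hg, rfl⟩
    exact Germ.coe_lt.trans (eventually_congr (.of_forall fun i => Nat.lt_succ_iff))

/-- The Σ_{n+1}-hull of the germ of the identity in an ultrapower of ℕ, as a structure for the
language of arithmetic. -/
def Hull (n : ℕ) : Type := hullSubsemiring n

noncomputable instance (n : ℕ) : lang.Structure (Hull n) := structureOf (hullSubsemiring n)

theorem pam_hull (n : ℕ) : PAm (Hull n) := pam_structureOf (hullSubsemiring n)

namespace Hull

instance : Nonempty (Hull n) := ⟨0⟩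

/-- A sequence representing an element of the hull. -/
noncomputable def rep (x : Hull n) : ℕ → ℕ := x.2.choose

theorem isHullFun_rep (x : Hull n) : IsHullFun n x.rep := x.2.choose_spec.1

theorem coe_rep (x : Hull n) : (x.rep : (hyperfilter ℕ : Filter ℕ).Germ ℕ) = x.1 :=
  x.2.choose_spec.2

theorem eq_iff {x y : Hull n} : x = y ↔ ∀ᶠ i in hyperfilter ℕ, x.rep i = y.rep i := by
  rw [← EventuallyEq, ← Germ.coe_eq, coe_rep, coe_rep]
  exact Subtype.ext_iff

theorem lt_iff {x y : Hull n} : x < y ↔ ∀ᶠ i in hyperfilter ℕ, x.rep i < y.rep i := by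
  rw [← Germ.coe_lt, coe_rep, coe_rep]
  exact Iff.rfl

theorem rep_zero : ∀ᶠ i in hyperfilter ℕ, (0 : Hull n).rep i = 0 :=
  Germ.coe_eq.1 (coe_rep 0)

theorem rep_one : ∀ᶠ i in hyperfilter ℕ, (1 : Hull n).rep i = 1 :=
  Germ.coe_eq.1 (coe_rep 1)

theorem rep_add (x y : Hull n) :
    ∀ᶠ i in hyperfilter ℕ, (x + y).rep i = x.rep i + y.rep i :=
  Germ.coe_eq.1 <| (coe_rep (x + y)).trans
    (congrArg₂ (· + ·) (coe_rep x) (coe_rep y)).symm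

theorem rep_mul (x y : Hull n) :
    ∀ᶠ i in hyperfilter ℕ, (x * y).rep i = x.rep i * y.rep i :=
  Germ.coe_eq.1 <| (coe_rep (x * y)).trans
    (congrArg₂ (· * ·) (coe_rep x) (coe_rep y)).symm

theorem exists_rep_eq {f : ℕ → ℕ} (hf : IsHullFun n f) :
    ∃ x : Hull n, ∀ᶠ i in hyperfilter ℕ, x.rep i = f i :=
  ⟨⟨f, f, hf, rfl⟩, Germ.coe_eq.1 (coe_rep _)⟩

variable (n) in
/-- The germ of the identity, the generator of the hull. -/
noncomputable def gen : Hull n := ⟨_, _, .of_isSigmaMap_index .id, rfl⟩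

theorem rep_gen : ∀ᶠ i in hyperfilter ℕ, (gen n).rep i = i := Germ.coe_eq.1 (coe_rep _)

theorem exists_iff_eventually {ι : Type} [Finite ι] (v : ι → Hull n) {R : ℕ → (ι → ℕ) → ℕ → Prop}
    (hR : IsSigma ℕ (n + 1) fun p : (ℕ × (ι → ℕ)) × ℕ => R p.1.1 p.1.2 p.2) :
    (∃ y : Hull n, ∀ᶠ i in hyperfilter ℕ, R i (fun j => (v j).rep i) (y.rep i)) ↔
      ∀ᶠ i in hyperfilter ℕ, ∃ y, R i (fun j => (v j).rep i) y := by
  refine ⟨fun ⟨y, hy⟩ => hy.mono fun i hi => ⟨_, hi⟩, fun h => ?_⟩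
  obtain ⟨g, hg, hRg⟩ := IsHullFun.exists_skolem (fun j => (v j).isHullFun_rep) hR h
  obtain ⟨y, hy⟩ := exists_rep_eq hg
  exact ⟨y, by filter_upwards [hRg, hy] with i hi hyi using hyi ▸ hi⟩

end Hull

end Hull

section Los

open Filter

variable {n k : ℕ} {α : Type}

theorem Hull.rep_realize (t : lang.Term α) (v : α → Hull n) :
    ∀ᶠ i in hyperfilter ℕ, (t.realize v).rep i =
      @Term.realize lang ℕ (structureOf ℕ) α (fun a => (v a).rep i) t := by
  induction t with
  | var a => exact .of_forall fun i => rfl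
  | func F ts ih =>
    cases F with
    | zero => simpa only [Term.realize, funMap_zero] using! rep_zero
    | one => simpa only [Term.realize, funMap_one] using! rep_one
    | add =>
      simp only [Term.realize, funMap_add]
      filter_upwards [rep_add ((ts 0).realize v) ((ts 1).realize v), ih 0, ih 1] with i h h₀ h₁
      rw [h, h₀, h₁]
      rfl
    | mul =>
      simp only [Term.realize, funMap_mul]
      filter_upwards [rep_mul ((ts 0).realize v) ((ts 1).realize v), ih 0, ih 1] with i h h₀ h₁
      rw [h, h₀, h₁]
      rfl

theorem Hull.rep_realize_sumElim (t : lang.Term (α ⊕ Fin k)) (v : α → Hull n)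
    (w : Fin k → Hull n) : ∀ᶠ i in hyperfilter ℕ, (t.realize (Sum.elim v w)).rep i =
      @Term.realize lang ℕ (structureOf ℕ) _
        (Sum.elim (fun a => (v a).rep i) fun j => (w j).rep i) t :=
  (rep_realize t (Sum.elim v w)).mono fun i h => h.trans (by congr; ext (a | j) <;> rfl)

/-- Łoś's theorem for the formula `φ` in the hull. -/
def IsLos (n : ℕ) (φ : lang.BoundedFormula α k) : Prop :=
  ∀ (v : α → Hull n) (w : Fin k → Hull n), φ.Realize v w ↔
    ∀ᶠ i in hyperfilter ℕ, NatRealize φ (fun a => (v a).rep i) fun j => (w j).rep i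

namespace IsLos

theorem falsum : IsLos n (BoundedFormula.falsum : lang.BoundedFormula α k) :=
  fun _ _ => eventually_const.symm

theorem equal (t u : lang.Term (α ⊕ Fin k)) : IsLos n (BoundedFormula.equal t u) := by
  intro v w
  refine Hull.eq_iff.trans (eventually_congr ?_)
  filter_upwards [Hull.rep_realize_sumElim t v w, Hull.rep_realize_sumElim u v w] with i ht hu
  rw [ht, hu]
  exact Iff.rfl

theorem rel {l : ℕ} (R : lang.Relations l) (ts : Fin l → lang.Term (α ⊕ Fin k)) :
    IsLos n (BoundedFormula.rel R ts) := by
  intro v w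
  cases R
  refine (relMap_lt _).trans (Hull.lt_iff.trans (eventually_congr ?_))
  filter_upwards [Hull.rep_realize_sumElim (ts 0) v w, Hull.rep_realize_sumElim (ts 1) v w]
    with i ht hu
  rw [ht, hu]
  exact Iff.rfl

theorem imp {φ ψ : lang.BoundedFormula α k} (hφ : IsLos n φ) (hψ : IsLos n ψ) :
    IsLos n (φ.imp ψ) :=
  fun v w => (imp_congr (hφ v w) (hψ v w)).trans Ultrafilter.eventually_imp.symm

theorem all [Finite α] {φ : lang.BoundedFormula α (k + 1)} (hφ : IsLos n φ)
    (h : IsSigma ℕ (n + 1) fun p : (α → ℕ) × (Fin (k + 1) → ℕ) => ¬NatRealize φ p.1 p.2) :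
    IsLos n φ.all := by
  intro v w
  have hsnoc (y : Hull n) (i : ℕ) : (fun j => ((Fin.snoc w y : Fin (k + 1) → Hull n) j).rep i) =
      (Fin.snoc (fun j => (w j).rep i) (y.rep i) : Fin (k + 1) → ℕ) :=
    Fin.comp_snoc (fun x : Hull n => x.rep i) w y
  have skolem := Hull.exists_iff_eventually (Sum.elim v w)
    (R := fun _ z y => ¬NatRealize φ (fun a => z (.inl a))
      (Fin.snoc (fun j => z (.inr j)) y : Fin (k + 1) → ℕ))
    (h.comp (G := fun p : (ℕ × (α ⊕ Fin k → ℕ)) × ℕ => (fun a => p.1.2 (.inl a),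
      (Fin.snoc (fun j => p.1.2 (.inr j)) p.2 : Fin (k + 1) → ℕ))) (by fun_prop))
  rw [BoundedFormula.realize_all, ← not_iff_not, ← Ultrafilter.eventually_not, not_forall]
  simp only [hφ _ _, ← Ultrafilter.eventually_not, hsnoc]
  exact skolem.trans (eventually_congr (.of_forall fun i => not_forall.symm))

theorem ex [Finite α] {φ : lang.BoundedFormula α (k + 1)} (hφ : IsLos n φ)
    (h : IsSigma ℕ (n + 1) fun p : (α → ℕ) × (Fin (k + 1) → ℕ) => NatRealize φ p.1 p.2) :
    IsLos n φ.ex :=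
  (all (hφ.imp falsum) (h.congr fun _ => not_not.symm)).imp falsum

end IsLos

theorem IsDelta0.isLos [Finite α] {φ : lang.BoundedFormula α k} (hφ : IsDelta0 k φ) :
    IsLos n φ := by
  induction hφ with
  | falsum => exact .falsum
  | equal k t u => exact .equal t u
  | rel k l R ts => exact .rel R ts
  | imp k _ _ ihφ ihψ => exact ihφ.imp ihψ
  | bdAll k t hφ ih =>
    exact .all (.imp (.rel _ _) ih)
      (PiFm.isSigma_not_natRealize (.delta0 _ _ (.imp _ (.rel ..) hφ)))

mutual

theorem SigmaFm.isLos [Finite α] {m k : ℕ} (hmn : m ≤ n + 1) {φ : lang.BoundedFormula α k} :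
    SigmaFm m k φ → IsLos n φ
  | .delta0 _ _ hφ => hφ.isLos
  | .ofPi m _ hφ => PiFm.isLos (by lia) hφ
  | .ex m _ hφ => (SigmaFm.isLos hmn hφ).ex (hφ.isSigma_natRealize.mono hmn)

theorem PiFm.isLos [Finite α] {m k : ℕ} (hmn : m ≤ n + 1) {φ : lang.BoundedFormula α k} :
    PiFm m k φ → IsLos n φ
  | .delta0 _ _ hφ => hφ.isLos
  | .ofSigma m _ hφ => SigmaFm.isLos (by lia) hφ
  | .all m _ hφ => (PiFm.isLos hmn hφ).all (hφ.isSigma_not_natRealize.mono hmn)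

end

end Los

theorem PAm.exists_eq_add_one {M : Type} [lang.Structure M] (hM : PAm M) {x : M} (hx : x ≠ 0) :
    ∃ z, x = z + 1 := by
  have hpos : 0 < x := (hM.zero_le x).resolve_right hx.symm
  rcases hM.discrete x hpos with h | rfl
  · obtain ⟨z, rfl⟩ := hM.sub_exists 1 x h
    exact ⟨z, hM.add_comm 1 z⟩
  · exact ⟨0, ((hM.add_comm 0 1).trans (hM.add_zero 1)).symm⟩

section HullArithmetic

open Filter

variable {n : ℕ}

open Classical in
theorem isig_hull (n : ℕ) : ISig n (Hull n) := by
  rintro A ⟨p, φ, w, hφ, hA⟩ h0 hs x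
  let P (z : Fin p → ℕ) (y : ℕ) : Prop := NatRealize φ (Sum.elim (fun _ => y) z) finZeroElim
  have hP : IsSigma ℕ n fun q : (Fin p → ℕ) × ℕ => P q.1 q.2 := hφ.isSigma_natRealize.comp
    (G := fun q : (Fin p → ℕ) × ℕ => (Sum.elim (fun _ => q.2) q.1, (finZeroElim : Fin 0 → ℕ)))
    (by fun_prop)
  have mem_iff (x : Hull n) :
      x ∈ A ↔ ∀ᶠ i in hyperfilter ℕ, P (fun j => (w j).rep i) (x.rep i) := by
    refine (hA fun _ => x).trans ((hφ.isLos n.le_succ _ _).trans (eventually_congr ?_))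
    refine .of_forall fun i => iff_of_eq (congrArg₂ _ (funext ?_) (Subsingleton.elim _ _))
    rintro (j | j) <;> rfl
  by_contra hx
  rw [mem_iff, ← Ultrafilter.eventually_not] at hx
  have hleast : IsSigma ℕ (n + 1) fun q : (ℕ × (Fin p → ℕ)) × ℕ =>
      ¬P q.1.2 q.2 ∧ ∀ y' < q.2, P q.1.2 y' :=
    .and (hP.comp (G := fun q : (ℕ × (Fin p → ℕ)) × ℕ => (q.1.2, q.2)) (by fun_prop)).not
      (IsSigma.ball .snd (hP.comp (G := fun q : ((ℕ × (Fin p → ℕ)) × ℕ) × ℕ => (q.1.1.2, q.2))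
        (by fun_prop))).succ
  obtain ⟨y, hy⟩ := (Hull.exists_iff_eventually w
    (R := fun _ z y => ¬P z y ∧ ∀ y' < y, P z y') hleast).2 (hx.mono fun i hi =>
      have h : ∃ y, ¬P (fun j => (w j).rep i) y := ⟨_, hi⟩
      ⟨Nat.find h, Nat.find_spec h, fun y' hy' => not_not.1 (Nat.find_min h hy')⟩)
  have hyA : y ∉ A := by
    rw [mem_iff, ← Ultrafilter.eventually_not]
    exact hy.mono fun i hi => hi.1
  obtain ⟨z, rfl⟩ := (pam_hull n).exists_eq_add_one (x := y) (by rintro rfl; exact hyA h0)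
  refine hyA (hs z ((mem_iff z).2 ?_))
  filter_upwards [hy, Hull.rep_add z 1, Hull.rep_one (n := n)] with i hi hadd hone
  exact hi.2 _ (by lia)

theorem Hull.sigmaDef2 {R : ℕ → ℕ → ℕ → Prop}
    (hR : IsSigma ℕ (n + 1) fun p : ℕ × ℕ × ℕ => R p.1 p.2.1 p.2.2) :
    SigmaDef2 (n + 1) (Hull n) fun x y =>
      ∀ᶠ i in hyperfilter ℕ, R i (x.rep i) (y.rep i) := by
  let := structureOf ℕ
  obtain ⟨s, hs⟩ := hR.exists_sigmaFm
  obtain ⟨⟨φ, hφ, hφR⟩, -⟩ := hs (α := Fin 2 ⊕ Fin (s.length + 1)) (k := 0)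
    (v := fun p => Sum.elim ![p.2.1, p.2.2] (Fin.cons p.1 s.get : Fin (s.length + 1) → ℕ))
    (w := fun _ => finZeroElim) {
      exists_var := by
        rintro _ (⟨_, rfl, rfl⟩ | ⟨_, ⟨_, rfl, rfl⟩ | ⟨_, rfl, rfl⟩, rfl⟩)
        exacts [⟨.inl (.inr 0), fun _ => rfl⟩, ⟨.inl (.inl 0), fun _ => rfl⟩,
          ⟨.inl (.inl 1), fun _ => rfl⟩]
      exists_const := fun c hc => by
        obtain ⟨j, rfl⟩ := List.get_of_mem hc
        exact ⟨.inl (.inr j.succ), fun _ => rfl⟩ }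
  choose c hc using fun j => exists_rep_eq (n := n) (.const (s.get j))
  refine ⟨_, φ, Fin.cons (gen n) c, hφ, fun v => Iff.symm ?_⟩
  refine (hφ.isLos le_rfl _ _).trans (eventually_congr ?_)
  filter_upwards [eventually_all.2 hc, rep_gen (n := n)] with i hci hi
  rw [hφR (i, (v 0).rep i, (v 1).rep i)]
  refine iff_of_eq (congrArg₂ _ (funext ?_) (Subsingleton.elim _ _))
  rintro (j | j)
  · fin_cases j <;> rfl
  · cases j using Fin.cases with
    | zero => exact hi
    | succ j => exact hci j

end HullArithmetic

section Balance

variable {α : Type} [DecidableEq α] {h l : List α} {t : α} {c : ℕ}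

/-- Append to `l` two entries of `h` that are new, if there are as many, and then `t`. The first
occurrences of the two new entries in the resulting list have indices of different parity. -/
def balance (h : List α) (t : α) (l : List α) : List α := l ++ ((h.filter (· ∉ l)).take 2 ++ [t])

theorem prefix_balance : l <+: balance h t l := List.prefix_append _ _

theorem mem_balance : t ∈ balance h t l := by simp [balance]

theorem length_balance_le : (balance h t l).length ≤ l.length + 3 := by
  simp [balance]

theorem exists_mem_balance_idxOf_mod_two (hh : h.Nodup) (hl : l.length + 2 ≤ h.length)
    (hc : c < 2) : ∃ x ∈ h, x ∈ balance h t l ∧ (balance h t l).idxOf x % 2 = c := by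
  have hsub : h ⊆ l ++ h.filter (· ∉ l) := fun x hx => by
    by_cases hxl : x ∈ l <;> simp [hx, hxl]
  have hlen := hh.length_le_of_subset hsub
  obtain ⟨x, y, r, hxy⟩ : ∃ x y r, h.filter (· ∉ l) = x :: y :: r := by
    rw [List.length_append] at hlen
    match hr : h.filter (· ∉ l), hlen with
    | [], _ | [_], _ => grind
    | x :: y :: r, _ => exact ⟨x, y, r, rfl⟩
  have hx : x ∈ h ∧ x ∉ l := by simpa using (hxy ▸ .head _ : x ∈ h.filter (· ∉ l))
  have hy : y ∈ h ∧ y ∉ l := by simpa using (hxy ▸ .tail _ (.head _) : y ∈ h.filter (· ∉ l))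
  have hne : x ≠ y := by
    have := hxy ▸ hh.filter (· ∉ l)
    aesop
  have hbal : balance h t l = l ++ ([x, y] ++ [t]) := by simp only [balance, hxy, List.take]
  have hidx : (balance h t l).idxOf x = l.length := by
    simp [hbal, List.idxOf_append_of_notMem hx.2]
  have hidy : (balance h t l).idxOf y = l.length + 1 := by
    simp [hbal, List.idxOf_append_of_notMem hy.2, List.idxOf_cons_ne _ hne]
  rcases (by lia : l.length % 2 = c ∨ (l.length + 1) % 2 = c) with h | h
  · exact ⟨x, hx.1, by simp [hbal], by rwa [hidx]⟩
  · exact ⟨y, hy.1, by simp [hbal], by rwa [hidy]⟩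

end Balance

section Listing

variable {A : ℕ → Prop} {b k s s' t x x' e e' : ℕ}

/-- The first `k` values of the sequence coded by `t` through Gödel's β-function. -/
def betaList (t k : ℕ) : List ℕ := (List.range k).map (Nat.beta t)

theorem exists_beta_eq_beta_of_not_nodup (h : ¬(betaList t k).Nodup) :
    ∃ i j, i < j ∧ j < k ∧ Nat.beta t i = Nat.beta t j := by
  by_contra! hne
  refine h (List.nodup_range.map_on fun i hi j hj hij => ?_)
  rw [List.mem_range] at hi hj
  exact le_antisymm (le_of_not_gt fun hlt => hne j i hlt hi hij.symm)
    (le_of_not_gt fun hlt => hne i j hlt hj hij)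

open Classical in
/-- The list built by running through the stages `s` with `A s` in increasing order and balancing,
at each of them, the first `k` values of the sequence coded by `s.unpair.1`, then adding
`s.unpair.1` itself. -/
noncomputable def listing (A : ℕ → Prop) (k : ℕ) : ℕ → List ℕ
  | 0 => []
  | s + 1 =>
    if A s then balance (betaList s.unpair.1 k) s.unpair.1 (listing A k s) else listing A k s

/-- `e` is the index of the first occurrence of `x` in the lists `listing A k s`. -/
def IsListingIndex (A : ℕ → Prop) (k x e : ℕ) : Prop :=
  ∃ s, x ∈ listing A k s ∧ (listing A k s).idxOf x = e

theorem listing_prefix (h : s ≤ s') : listing A k s <+: listing A k s' := by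
  induction h with
  | refl => exact List.prefix_rfl
  | step _ ih =>
    refine ih.trans ?_
    rw [listing]
    split
    exacts [prefix_balance, List.prefix_rfl]

theorem length_listing_le (hA : ∀ S : Finset ℕ, (∀ s ∈ S, A s) → S.card ≤ b) :
    (listing A k s).length ≤ 3 * b := by
  classical
  suffices (listing A k s).length ≤ 3 * ((Finset.range s).filter A).card from
    this.trans (Nat.mul_le_mul_left 3 (hA _ fun s hs => (Finset.mem_filter.1 hs).2))
  induction s with
  | zero => simp [listing]
  | succ s ih =>
    rw [listing, Finset.range_add_one, Finset.filter_insert]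
    split
    · rw [Finset.card_insert_of_notMem (by simp)]
      exact length_balance_le.trans (by lia)
    · exact ih

theorem idxOf_listing_eq (hx : x ∈ listing A k s) (hx' : x ∈ listing A k s') :
    (listing A k s).idxOf x = (listing A k s').idxOf x := by
  wlog h : s ≤ s' generalizing s s'
  · exact (this hx' hx (le_of_not_ge h)).symm
  · obtain ⟨r, hr⟩ := listing_prefix (A := A) (k := k) h
    rw [← hr, List.idxOf_append_of_mem hx]

namespace IsListingIndex

theorem lt (hA : ∀ S : Finset ℕ, (∀ s ∈ S, A s) → S.card ≤ b) :
    IsListingIndex A k x e → e < 3 * b := by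
  rintro ⟨s, hx, rfl⟩
  exact (List.idxOf_lt_length_of_mem hx).trans_le (length_listing_le hA)

theorem right_unique : IsListingIndex A k x e → IsListingIndex A k x e' → e = e' := by
  rintro ⟨s, hx, rfl⟩ ⟨s', hx', rfl⟩
  exact idxOf_listing_eq hx hx'

theorem left_unique : IsListingIndex A k x e → IsListingIndex A k x' e → x = x' := by
  rintro ⟨s, hx, rfl⟩ ⟨s', hx', h⟩
  have hm := (listing_prefix (A := A) (k := k) (le_max_left s s')).subset hx
  have hm' := (listing_prefix (A := A) (k := k) (le_max_right s s')).subset hx'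
  rw [idxOf_listing_eq hx hm, idxOf_listing_eq hx' hm'] at h
  exact ((List.idxOf_inj hm').1 h).symm

end IsListingIndex

theorem exists_isListingIndex (hs : A s) : ∃ e, IsListingIndex A k s.unpair.1 e :=
  ⟨_, s + 1, by simp only [listing, if_pos hs, mem_balance], rfl⟩

theorem exists_isListingIndex_mod_two (hA : ∀ S : Finset ℕ, (∀ s ∈ S, A s) → S.card ≤ b)
    (hs : A s) (hnd : (betaList s.unpair.1 (3 * b + 2)).Nodup) (he : e < 2) :
    ∃ j < 3 * b + 2, ∃ e', IsListingIndex A (3 * b + 2) (Nat.beta s.unpair.1 j) e' ∧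
      e' % 2 = e := by
  obtain ⟨x, hx, hxb, hxe⟩ := exists_mem_balance_idxOf_mod_two (t := s.unpair.1)
    (l := listing A (3 * b + 2) s) hnd
    (by simpa [betaList] using length_listing_le hA) he
  obtain ⟨j, hj, rfl⟩ := List.mem_map.1 hx
  exact ⟨j, List.mem_range.1 hj, _, ⟨s + 1, by simpa only [listing, if_pos hs] using hxb, rfl⟩,
    by simpa only [listing, if_pos hs] using hxe⟩

end Listing

section ListingDefinability

variable {Γ : Type} [Context ℕ Γ] {m : ℕ} {A : Γ → ℕ → Prop} {k : Γ → ℕ}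

theorem primrec_betaList : Primrec₂ betaList := by
  have hbeta : Primrec₂ Nat.beta := Primrec.nat_mod.comp
    (.comp .fst (.comp .unpair .fst))
    (Primrec.succ.comp (Primrec.nat_mul.comp (.comp .succ .snd) (.comp .snd (.comp .unpair .fst))))
  exact .list_map (Primrec.list_range.comp .snd) (hbeta.comp (.comp .fst .fst) .snd)

theorem primrec_balance :
    Primrec fun p : (List ℕ × ℕ) × List ℕ => balance p.1.1 p.1.2 p.2 := by
  have hmem : PrimrecRel fun (x : ℕ) (l : List ℕ) => x ∉ l := .not <|
    (PrimrecRel.comp (PrimrecRel.exists_mem_list Primrec.eq) Primrec.snd Primrec.fst).of_eq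
      fun p : ℕ × List ℕ => by simp
  have hnew : Primrec fun p : (List ℕ × ℕ) × List ℕ => (p.1.1.filter (· ∉ p.2)).take 2 :=
    Primrec.list_take.comp (.const 2) (hmem.listFilter.comp (.comp .fst .fst) .snd)
  exact Primrec.list_append.comp .snd (Primrec.list_append.comp hnew
    (Primrec.list_cons.comp (.comp .snd .fst) (.const [])))

theorem isSigmaMap_encode_listing (hA : IsSigma ℕ (m + 1) fun p : Γ × ℕ => A p.1 p.2)
    (hA' : IsSigma ℕ (m + 1) fun p : Γ × ℕ => ¬A p.1 p.2) (hk : IsSigmaMap m k) :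
    IsSigmaMap m fun p : Γ × ℕ => Encodable.encode (listing (A p.1) (k p.1) p.2) := by
  classical
  let step (γ : Γ) (s l : ℕ) : ℕ :=
    if A γ s then Encodable.encode
      (balance (betaList s.unpair.1 (k γ)) s.unpair.1 (Denumerable.ofNat (List ℕ) l))
    else l
  have hbal : Primrec fun q : (ℕ × ℕ) × List ℕ => balance (betaList q.1.1 q.1.2) q.1.1 q.2 :=
    primrec_balance.comp (.pair (.pair (primrec_betaList.comp (.comp .fst .fst)
      (.comp .snd .fst)) (.comp .fst .fst)) .snd)
  have hstep : IsSigmaMap m fun p : Γ × ℕ × ℕ => step p.1 p.2.1 p.2.2 := by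
    refine .ite (hA.comp (G := fun p : Γ × ℕ × ℕ => (p.1, p.2.1)) (by fun_prop))
      (hA'.comp (G := fun p : Γ × ℕ × ℕ => (p.1, p.2.1)) (by fun_prop))
      (.encode_primrec_comp hbal (a := fun p : Γ × ℕ × ℕ =>
        ((p.2.1.unpair.1, k p.1), Denumerable.ofNat (List ℕ) p.2.2)) ?_) (by fun_prop)
    simp only [Encodable.encode_prod_val, Encodable.encode_nat, Denumerable.encode_ofNat]
    fun_prop
  have hrec : IsSigmaMap m fun p : Γ × ℕ =>
      (Nat.rec (Encodable.encode ([] : List ℕ)) (step p.1) p.2 : ℕ) := .natRec (.const _) hstep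
  convert hrec with p
  induction p.2 with
  | zero => rfl
  | succ s ih =>
    simp only [listing, step, ← ih, Denumerable.ofNat_encode]
    split <;> rfl

theorem isSigma_isListingIndex (hA : IsSigma ℕ (m + 1) fun p : Γ × ℕ => A p.1 p.2)
    (hA' : IsSigma ℕ (m + 1) fun p : Γ × ℕ => ¬A p.1 p.2) (hk : IsSigmaMap m k) :
    IsSigma ℕ (m + 1) fun p : Γ × ℕ × ℕ => IsListingIndex (A p.1) (k p.1) p.2.1 p.2.2 := by
  have hlist : IsSigmaMap m fun p : (Γ × ℕ × ℕ) × ℕ =>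
      Encodable.encode (listing (A p.1.1) (k p.1.1) p.2) :=
    (isSigmaMap_encode_listing hA hA' hk).comp (F := fun p : (Γ × ℕ × ℕ) × ℕ => (p.1.1, p.2))
      (by fun_prop)
  have hpair : IsSigmaMap m fun p : (Γ × ℕ × ℕ) × ℕ =>
      Encodable.encode (p.1.2.1, listing (A p.1.1) (k p.1.1) p.2) := by
    simp only [Encodable.encode_prod_val, Encodable.encode_nat]
    fun_prop
  have hidx : IsSigmaMap m fun p : (Γ × ℕ × ℕ) × ℕ =>
      (listing (A p.1.1) (k p.1.1) p.2).idxOf p.1.2.1 :=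
    .encode_primrec_comp (Primrec.list_idxOf.comp .fst .snd) hpair
  have hlen : IsSigmaMap m fun p : (Γ × ℕ × ℕ) × ℕ => (listing (A p.1.1) (k p.1.1) p.2).length :=
    .encode_primrec_comp Primrec.list_length hlist
  exact .ex (((hidx.lt hlen).congr fun p => List.idxOf_lt_length_iff).and (hidx.eq (by fun_prop)))

end ListingDefinability

section NamingScheme

open Filter

variable {n : ℕ} {A : ℕ → ℕ → Prop}

/-- A Δ_{n+1} set of stages such that at the index `i` there are at most `i` stages, a stage `s`
names the number `s.unpair.1`, and almost everywhere the value of a given hull function is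
named. -/
structure IsNamingScheme (n : ℕ) (A : ℕ → ℕ → Prop) : Prop where
  isSigma : IsSigma ℕ (n + 1) fun p : ℕ × ℕ => A p.1 p.2
  isSigma_not : IsSigma ℕ (n + 1) fun p : ℕ × ℕ => ¬A p.1 p.2
  card_le (i : ℕ) (S : Finset ℕ) : (∀ s ∈ S, A i s) → S.card ≤ i
  exists_stage {f : ℕ → ℕ} : IsHullFun n f → ∀ᶠ i in hyperfilter ℕ, ∃ s, A i s ∧ s.unpair.1 = f i

theorem exists_isNamingScheme (n : ℕ) : ∃ A, IsNamingScheme n A := by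
  obtain ⟨D, hD, hDu, hDe⟩ := exists_universal_function n
  obtain ⟨P, hP, hP', hPu, hDP⟩ := hD.exists_unique_witness
  have hnot : IsSigma ℕ (n + 1) fun p : ℕ × ℕ => ¬p.2.unpair.2.unpair.1 < p.1 :=
    (IsSigmaMap.lt (s := Prod.fst) (t := fun p : ℕ × ℕ => p.2.unpair.2.unpair.1 + 1)
      (by fun_prop) (by fun_prop)).congr fun p => by lia
  have hF : IsSigmaMap n fun p : ℕ × ℕ =>
      (((p.1, p.2.unpair.2.unpair.1), p.2.unpair.1), p.2.unpair.2.unpair.2) := by fun_prop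
  refine ⟨fun i s => s.unpair.2.unpair.1 < i ∧
    P ((i, s.unpair.2.unpair.1), s.unpair.1) s.unpair.2.unpair.2,
    (IsSigmaMap.lt (by fun_prop) (by fun_prop)).and (hP.comp_isSigmaMap hF),
    (hnot.or (hP'.comp_isSigmaMap hF)).congr fun p => not_and_or.symm, fun i S hS => ?_, ?_⟩
  · refine (Finset.card_le_card_of_injOn (t := .range i) (fun s => s.unpair.2.unpair.1)
      (fun s hs => Finset.mem_coe.2 (Finset.mem_range.2 (hS s hs).1)) ?_).trans_eq
      (Finset.card_range i)
    intro s hs s' hs' (he : s.unpair.2.unpair.1 = s'.unpair.2.unpair.1)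
    have h := (hS s hs).2
    have h' := (hS s' hs').2
    rw [← he] at h'
    have hx : s.unpair.1 = s'.unpair.1 := hDu i _ _ _ ((hDP _).2 ⟨_, h⟩) ((hDP _).2 ⟨_, h'⟩)
    rw [← hx] at h'
    exact Nat.pairEquiv.symm.injective
      (Prod.ext hx (Nat.pairEquiv.symm.injective (Prod.ext he (hPu _ _ _ h h'))))
  · rintro f ⟨G, hG, hGf⟩
    obtain ⟨e, he⟩ := hDe G hG
    have hlt : ∀ᶠ i in hyperfilter ℕ, e < i :=
      (Nat.cofinite_eq_atTop ▸ eventually_gt_atTop e).filter_mono (hyperfilter_le_cofinite)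
    filter_upwards [hGf, hlt] with i hi hei
    obtain ⟨w, hw⟩ := (hDP ((i, e), f i)).1 (he i _ hi)
    exact ⟨Nat.pair (f i) (Nat.pair e w), by simpa using ⟨hei, hw⟩, by simp⟩

end NamingScheme

namespace PAm

variable {M : Type} [lang.Structure M] (hM : PAm M)

include hM

theorem zero_ne_one : (0 : M) ≠ 1 := fun h =>
  hM.lt_irrefl 0 (by simpa only [← h] using hM.zero_lt_one)

theorem one_lt_two : (1 : M) < 1 + 1 := hM.lt_add_one_iff.2 (.inr rfl)

theorem zero_lt_two : (0 : M) < 1 + 1 := hM.lt_trans _ _ _ hM.zero_lt_one hM.one_lt_two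

end PAm

namespace SigmaInjWhole

variable {M : Type} [lang.Structure M] {m : ℕ} {a : M}

theorem not_gphp (h : SigmaInjWhole M m a) : ¬GPHP M m := by
  obtain ⟨F, hF, htot, hfun, hinj⟩ := h
  intro hG
  obtain ⟨y, hy⟩ := hG a
  exact hy ⟨F, hF, fun u _ => htot u, fun u v v' _ => hfun u v v', fun u u' v _ _ => hinj u u' v⟩

theorem not_forall_fairFRT1 (hM : PAm M) (h : SigmaInjWhole M m a) :
    ¬∀ k : M, 1 ≤ k → FairFRT1 M m k := by
  obtain ⟨F, hF, htot, hfun, hinj⟩ := h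
  intro hfair
  obtain ⟨v, hva, -⟩ := htot 0
  have h0a : 0 < a := (hM.zero_le v).elim (fun h0 => hM.lt_trans _ _ _ h0 hva) (· ▸ hva)
  obtain ⟨y, hy⟩ := hfair a (hM.discrete a h0a) (1 + 1)
  obtain ⟨H, ⟨-, hHtot, -, hHinj⟩, i, hi⟩ :=
    hy F ⟨hF, fun z _ => htot z, fun z i i' _ => hfun z i i'⟩
  obtain ⟨z₀, -, hz₀⟩ := hHtot 0 hM.zero_lt_two
  obtain ⟨z₁, -, hz₁⟩ := hHtot 1 hM.one_lt_two
  obtain rfl := hinj z₀ z₁ i (hi 0 z₀ hM.zero_lt_two hz₀) (hi 1 z₁ hM.one_lt_two hz₁)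
  exact hM.zero_ne_one (hHinj 0 1 z₀ hM.zero_lt_two hM.one_lt_two hz₀ hz₁)

end SigmaInjWhole

section Counterexample

open Filter

variable {n : ℕ}

theorem Hull.exists_rep_eq_map {ι : Type} [Finite ι] (v : ι → Hull n) {t : ℕ × (ι → ℕ) → ℕ}
    (ht : IsSigmaMap n t) :
    ∃ x : Hull n, ∀ᶠ i in hyperfilter ℕ, x.rep i = t (i, fun j => (v j).rep i) :=
  exists_rep_eq (.of_isSigmaMap (fun j => (v j).isHullFun_rep) ht)

/-- The colouring of the hull by parity: `c` is the parity of the index of `x` in the listing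
whose stages are the naming stages `A`. -/
def HasParity (A : ℕ → ℕ → Prop) (x c : Hull n) : Prop := ∀ᶠ i in hyperfilter ℕ,
  ∃ e, IsListingIndex (A i) (3 * i + 2) (x.rep i) e ∧ e % 2 = c.rep i

theorem HasParity.right_unique {A : ℕ → ℕ → Prop} {x c c' : Hull n} (h : HasParity A x c)
    (h' : HasParity A x c') : c = c' := Hull.eq_iff.2 <| by
  filter_upwards [h, h'] with i ⟨e, he, hc⟩ ⟨e', he', hc'⟩
  rw [← hc, ← hc', he.right_unique he']

namespace IsNamingScheme

variable {A : ℕ → ℕ → Prop} (hA : IsNamingScheme n A)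

include hA

theorem isSigma_isListingIndex : IsSigma ℕ (n + 1) fun p : ℕ × ℕ × ℕ =>
    IsListingIndex (A p.1) (3 * p.1 + 2) p.2.1 p.2.2 :=
  ArithFC.isSigma_isListingIndex (k := fun i => 3 * i + 2) hA.isSigma hA.isSigma_not (by fun_prop)

theorem eventually_exists_isListingIndex (x : Hull n) :
    ∀ᶠ i in hyperfilter ℕ, ∃ e, IsListingIndex (A i) (3 * i + 2) (x.rep i) e := by
  filter_upwards [hA.exists_stage x.isHullFun_rep] with i ⟨s, hs, hsx⟩
  exact hsx ▸ exists_isListingIndex hs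

theorem sigmaInjWhole {a : Hull n} (ha : ∀ᶠ i in hyperfilter ℕ, a.rep i = 3 * i) :
    SigmaInjWhole (Hull n) (n + 1) a := by
  refine ⟨_, Hull.sigmaDef2 (R := fun i => IsListingIndex (A i) (3 * i + 2))
    hA.isSigma_isListingIndex, fun x => ?_, fun x e e' h h' => ?_,
    fun x x' e h h' => ?_⟩
  · obtain ⟨e, he⟩ := (Hull.exists_iff_eventually (fun _ : Unit => x)
      (R := fun i z e => IsListingIndex (A i) (3 * i + 2) (z ()) e)
      (hA.isSigma_isListingIndex.comp (G := fun p : (ℕ × (Unit → ℕ)) × ℕ => (p.1.1, p.1.2 (), p.2))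
        (by fun_prop))).2 (hA.eventually_exists_isListingIndex x)
    refine ⟨e, Hull.lt_iff.2 ?_, he⟩
    filter_upwards [he, ha] with i hi hai
    exact hai ▸ hi.lt (hA.card_le i)
  · exact Hull.eq_iff.2 (by filter_upwards [h, h'] with i hi hi' using hi.right_unique hi')
  · exact Hull.eq_iff.2 (by filter_upwards [h, h'] with i hi hi' using hi.left_unique hi')

theorem isSigma_parity : IsSigma ℕ (n + 1) fun p : ℕ × ℕ × ℕ =>
    ∃ e, IsListingIndex (A p.1) (3 * p.1 + 2) p.2.1 e ∧ e % 2 = p.2.2 := by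
  have hmod : IsSigmaMap n fun p : (ℕ × ℕ × ℕ) × ℕ => p.2 % 2 :=
    .encode_primrec_comp (Primrec.nat_mod.comp .id (.const 2)) .snd
  exact .ex ((hA.isSigma_isListingIndex.comp
    (G := fun p : (ℕ × ℕ × ℕ) × ℕ => (p.1.1, p.1.2.1, p.2)) (by fun_prop)).and
    (hmod.eq (by fun_prop)))

theorem isColoring1_hasParity (y : Hull n) :
    IsColoring1 (Hull n) (n + 1) y (1 + 1) (HasParity A) := by
  refine ⟨Hull.sigmaDef2 (R := fun i x c => ∃ e, IsListingIndex (A i) (3 * i + 2) x e ∧ e % 2 = c)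
    hA.isSigma_parity, fun x _ => ?_, fun x c c' _ h h' => h.right_unique h'⟩
  obtain ⟨c, hc⟩ := (Hull.exists_iff_eventually (fun _ : Unit => x)
    (R := fun i z c => ∃ e, IsListingIndex (A i) (3 * i + 2) (z ()) e ∧ e % 2 = c)
    (hA.isSigma_parity.comp (G := fun p : (ℕ × (Unit → ℕ)) × ℕ => (p.1.1, p.1.2 (), p.2))
      (by fun_prop))).2 <|
        (hA.eventually_exists_isListingIndex x).mono fun i ⟨e, he⟩ => ⟨_, e, he, rfl⟩
  refine ⟨c, Hull.lt_iff.2 ?_, hc⟩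
  filter_upwards [hc, Hull.rep_add (1 : Hull n) 1, Hull.rep_one (n := n)] with i ⟨e, _, he⟩ h2 h1
  rw [h2, h1, ← he]
  exact Nat.mod_lt e two_pos

theorem exists_hasParity {t X : Hull n} (hX : ∀ᶠ i in hyperfilter ℕ, X.rep i = 3 * i + 2)
    (ht : ∀ᶠ i in hyperfilter ℕ, (betaList (t.rep i) (X.rep i)).Nodup) {c : Hull n}
    (hc : c < 1 + 1) : ∃ j < X, ∃ x : Hull n,
      (∀ᶠ i in hyperfilter ℕ, x.rep i = Nat.beta (t.rep i) (j.rep i)) ∧ HasParity A x c := by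
  have hR : IsSigma ℕ (n + 1) fun p : (ℕ × (Fin 2 → ℕ)) × ℕ => p.2 < 3 * p.1.1 + 2 ∧
      ∃ e, IsListingIndex (A p.1.1) (3 * p.1.1 + 2) (Nat.beta (p.1.2 0) p.2) e ∧
        e % 2 = p.1.2 1 :=
    .and (.lt (by fun_prop) (by fun_prop)) (hA.isSigma_parity.comp_isSigmaMap
      (F := fun p : (ℕ × (Fin 2 → ℕ)) × ℕ => (p.1.1, Nat.beta (p.1.2 0) p.2, p.1.2 1))
      (by fun_prop))
  obtain ⟨j, hj⟩ := (Hull.exists_iff_eventually ![t, c] (R := fun i z j => j < 3 * i + 2 ∧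
    ∃ e, IsListingIndex (A i) (3 * i + 2) (Nat.beta (z 0) j) e ∧ e % 2 = z 1) hR).2 <| by
      filter_upwards [ht, hX, hA.exists_stage t.isHullFun_rep, Hull.lt_iff.1 hc,
        Hull.rep_add (1 : Hull n) 1, Hull.rep_one (n := n)] with i ht hX ⟨s, hs, hst⟩ hc h2 h1
      rw [← hst, hX] at ht
      rw [h2, h1] at hc
      simpa [hst] using exists_isListingIndex_mod_two (hA.card_le i) hs ht hc
  obtain ⟨x, hx⟩ := Hull.exists_rep_eq_map ![t, j] (t := fun p => Nat.beta (p.2 0) (p.2 1))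
    (by fun_prop)
  refine ⟨j, Hull.lt_iff.2 ?_, x, hx, ?_⟩
  · filter_upwards [hj, hX] with i hj hX using hX ▸ hj.1
  · filter_upwards [hj, hx] with i hj hx using hx ▸ hj.2

end IsNamingScheme

namespace Hull

theorem exists_beta_code {s a b : Hull n} (h : IsPairC s a b) : ∃ t : Hull n, ∀ j x : Hull n,
    (∀ᶠ i in hyperfilter ℕ, x.rep i = Nat.beta (t.rep i) (j.rep i)) → SeqAt s j x := by
  obtain ⟨t, ht⟩ := exists_rep_eq_map ![a, b] (t := fun p => Nat.pair (p.2 0) (p.2 1)) (by fun_prop)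
  refine ⟨t, fun j x hx => ⟨a, b, h, ?_⟩⟩
  have hmod : ∀ᶠ i in hyperfilter ℕ, ((j + 1) * b + 1).rep i = (j.rep i + 1) * b.rep i + 1 ∧
      x.rep i = a.rep i % ((j.rep i + 1) * b.rep i + 1) := by
    filter_upwards [hx, ht, rep_add ((j + 1) * b) 1, rep_mul (j + 1) b, rep_add j 1,
      rep_one (n := n)] with i hx ht h1 h2 h3 h4
    exact ⟨by rw [h1, h2, h3, h4], by rw [hx, ht]; simp [Nat.beta]⟩
  obtain ⟨q, hq⟩ := exists_rep_eq_map ![a, (j + 1) * b + 1] (t := fun p => p.2 0 / p.2 1)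
    (.encode_primrec_comp Primrec.nat_div (a := fun p : ℕ × (Fin 2 → ℕ) => (p.2 0, p.2 1)) (by
      simp only [Encodable.encode_prod_val, Encodable.encode_nat]
      fun_prop))
  refine ⟨lt_iff.2 ?_, q, eq_iff.2 ?_⟩
  · filter_upwards [hmod] with i ⟨hd, hx⟩
    rw [hd, hx]
    exact Nat.mod_lt _ (Nat.succ_pos _)
  · filter_upwards [hmod, hq, rep_add (q * ((j + 1) * b + 1)) x, rep_mul q ((j + 1) * b + 1)]
      with i ⟨hd, hx⟩ hq h1 h2
    have hq : q.rep i = a.rep i / ((j + 1) * b + 1).rep i := hq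
    rw [h1, h2, hq, hx, ← hd, Nat.div_add_mod']

theorem eventually_nodup_betaList {t X : Hull n} (h : ∀ j k x : Hull n, j < k → k < X →
      (∀ᶠ i in hyperfilter ℕ, x.rep i = Nat.beta (t.rep i) (j.rep i)) →
      ¬∀ᶠ i in hyperfilter ℕ, x.rep i = Nat.beta (t.rep i) (k.rep i)) :
    ∀ᶠ i in hyperfilter ℕ, (betaList (t.rep i) (X.rep i)).Nodup := by
  by_contra hnot
  have hR : IsSigma ℕ (n + 1) fun q : (ℕ × (Fin 2 → ℕ)) × ℕ => q.2.unpair.1 < q.2.unpair.2 ∧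
      q.2.unpair.2 < q.1.2 1 ∧
        Nat.beta (q.1.2 0) q.2.unpair.1 = Nat.beta (q.1.2 0) q.2.unpair.2 :=
    (IsSigmaMap.lt (by fun_prop) (by fun_prop)).and <|
      (IsSigmaMap.lt (by fun_prop) (by fun_prop)).and (IsSigmaMap.eq (by fun_prop) (by fun_prop))
  obtain ⟨p, hp⟩ := (exists_iff_eventually ![t, X] (R := fun _ z p => p.unpair.1 < p.unpair.2 ∧
    p.unpair.2 < z 1 ∧ Nat.beta (z 0) p.unpair.1 = Nat.beta (z 0) p.unpair.2) hR).2 <|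
    (Ultrafilter.eventually_not.2 hnot).mono fun i hi => by
      obtain ⟨j, k, hjk⟩ := exists_beta_eq_beta_of_not_nodup hi
      exact ⟨Nat.pair j k, by simpa using hjk⟩
  obtain ⟨j, hj⟩ := exists_rep_eq_map ![p] (t := fun q => (q.2 0).unpair.1) (by fun_prop)
  obtain ⟨k, hk⟩ := exists_rep_eq_map ![p] (t := fun q => (q.2 0).unpair.2) (by fun_prop)
  obtain ⟨x, hx⟩ := exists_rep_eq_map ![t, j] (t := fun q => Nat.beta (q.2 0) (q.2 1)) (by fun_prop)
  refine h j k x (lt_iff.2 ?_) (lt_iff.2 ?_) hx ?_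
  · filter_upwards [hp, hj, hk] with i hp hj hk using hj ▸ hk ▸ hp.1
  · filter_upwards [hp, hk] with i hp hk using hk ▸ hp.2.1
  · filter_upwards [hp, hj, hk, hx] with i hp hj hk hx
    exact hx.trans ((congrArg _ hj).trans (hp.2.2.trans (congrArg _ hk.symm)))

end Hull

theorem not_frt1_hull (n : ℕ) : ¬FRT1 (Hull n) (n + 1) (1 + 1) := by
  obtain ⟨A, hA⟩ := exists_isNamingScheme n
  obtain ⟨X, hX⟩ := Hull.exists_rep_eq (n := n) (f := fun i => 3 * i + 2)
    (.of_isSigmaMap_index (by fun_prop))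
  intro h
  obtain ⟨y, hy⟩ := h X
  obtain ⟨-, H, ⟨s, -, hval, hincr, hmem⟩, -, c, hc⟩ := hy _ (hA.isColoring1_hasParity y)
  have h0X : 0 < X := Hull.lt_iff.2 <| by
    filter_upwards [hX, Hull.rep_zero (n := n)] with i hX h0
    lia
  obtain ⟨_, -, a, b, hab, -⟩ := hval 0 h0X
  obtain ⟨t, ht⟩ := Hull.exists_beta_code hab
  have hnodup := Hull.eventually_nodup_betaList (t := t) (X := X) fun j k x hjk hkX hj hk =>
    (pam_hull n).lt_irrefl x (hincr j k x x hjk hkX (ht j x hj) (ht k x hk))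
  have hall (d : Hull n) (hd : d < 1 + 1) : c = d := by
    obtain ⟨j, hj, x, hx, hxd⟩ := hA.exists_hasParity hX hnodup hd
    exact (hc x ((hmem x).2 ⟨j, hj, ht j x hx⟩)).right_unique hxd
  exact (pam_hull n).zero_ne_one <|
    (hall 0 (pam_hull n).zero_lt_two).symm.trans (hall 1 (pam_hull n).one_lt_two)

theorem exists_sigmaInjWhole_hull (n : ℕ) : ∃ a, SigmaInjWhole (Hull n) (n + 1) a := by
  obtain ⟨A, hA⟩ := exists_isNamingScheme n
  obtain ⟨a, ha⟩ := Hull.exists_rep_eq (n := n) (.of_isSigmaMap_index (t := fun i => 3 * i)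
    (by fun_prop))
  exact ⟨a, hA.sigmaInjWhole ha⟩

end Counterexample

theorem statement_9_general (n : ℕ) :
    (∀ (M : Type) (_ : lang.Structure M), PAm M → ISig n M →
      (((∀ k : M, (1 : M) ≤ k → FairFRT1 M (n + 1) k) → FairFRT1 M (n + 1) ((1 : M) + 1)) ∧
        (FRT1 M (n + 1) ((1 : M) + 1) → FairFRT1 M (n + 1) ((1 : M) + 1)) ∧
        (GPHP M (n + 1) → FairFRT1 M (n + 1) ((1 : M) + 1)) ∧
        FairFRT1 M (n + 1) ((1 : M) + 1))) ∧
      (∃ (M : Type) (_ : lang.Structure M), PAm M ∧ ISig n M ∧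
        ¬∀ k : M, (1 : M) ≤ k → FairFRT1 M (n + 1) k) ∧
      (∃ (M : Type) (_ : lang.Structure M), PAm M ∧ ISig n M ∧
        ¬FRT1 M (n + 1) ((1 : M) + 1)) ∧
      (∃ (M : Type) (_ : lang.Structure M), PAm M ∧ ISig n M ∧
        ¬GPHP M (n + 1)) := by
  obtain ⟨a, ha⟩ := exists_sigmaInjWhole_hull n
  refine ⟨fun M _ hM hI => ?_, ?_, ?_, ?_⟩
  · have hfair := fairFRT1_two hM hI
    exact ⟨fun _ => hfair, fun _ => hfair, fun _ => hfair, hfair⟩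
  · exact ⟨Hull n, _, pam_hull n, isig_hull n, ha.not_forall_fairFRT1 (pam_hull n)⟩
  · exact ⟨Hull n, _, pam_hull n, isig_hull n, not_frt1_hull n⟩
  · exact ⟨Hull n, _, pam_hull n, isig_hull n, ha.not_gphp⟩

/-- For `n ≥ 1`, over PA⁻ + IΣn, fairFRT¹₂(Σ_{n+1}) is strictly weaker
than each of fairFRT¹(Σ_{n+1}), FRT¹₂(Σ_{n+1}) and GPHP(Σ_{n+1}): each of the three
implies fairFRT¹₂(Σ_{n+1}) over PA⁻ + IΣn (indeed PA⁻ + IΣn already proves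
fairFRT¹₂(Σ_{n+1})), while PA⁻ + IΣn (hence PA⁻ + IΣn + fairFRT¹₂(Σ_{n+1}))
proves none of the three. -/
theorem statement_9 (n : ℕ) (hn : 1 ≤ n) :
    (∀ (M : Type) (_ : lang.Structure M), PAm M → ISig n M →
      (((∀ k : M, (1 : M) ≤ k → FairFRT1 M (n + 1) k) → FairFRT1 M (n + 1) ((1 : M) + 1)) ∧
        (FRT1 M (n + 1) ((1 : M) + 1) → FairFRT1 M (n + 1) ((1 : M) + 1)) ∧
        (GPHP M (n + 1) → FairFRT1 M (n + 1) ((1 : M) + 1)) ∧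
        FairFRT1 M (n + 1) ((1 : M) + 1))) ∧
      (∃ (M : Type) (_ : lang.Structure M), PAm M ∧ ISig n M ∧
        ¬∀ k : M, (1 : M) ≤ k → FairFRT1 M (n + 1) k) ∧
      (∃ (M : Type) (_ : lang.Structure M), PAm M ∧ ISig n M ∧
        ¬FRT1 M (n + 1) ((1 : M) + 1)) ∧
      (∃ (M : Type) (_ : lang.Structure M), PAm M ∧ ISig n M ∧
        ¬GPHP M (n + 1)) :=
  statement_9_general n

end ArithFC
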